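/- arXiv:2207.02040 — 3 statements merged into one kernel-verified Lean document; each statement's English description precedes it below -/
import Mathlib

section
/- For every even integer n ≥ 4, the multiset {3^(n−2), 2^2} (that is, n−2 entries equal to 3 and two entries equal to 2) is outerplane-unigraphic: there exists an outerplane graph on n vertices with this degree multiset, and any two outerplane graphs on n vertices with this degree multiset are isomorphic. (Type A1 of the paper's Theorem 1, corresponding to the polytope degree sequence p−1, 4^(p−3), 3^2 with p = n+1 odd.) -/
/-- The vertices strictly between `a` and `b`, traversing the cycle `ZMod n`
from `a` towards `b` in the direction of increasing residues. -/
def Between (n : ℕ) (a b v : ZMod n) : Prop :=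
  0 < (v - a).val ∧ (v - a).val < (b - a).val

/-- `e` is an edge of the standard `n`-cycle on `ZMod n`. -/
def IsCycleEdge (n : ℕ) (e : Sym2 (ZMod n)) : Prop :=
  ∃ i : ZMod n, e = s(i, i + 1)

/-- A chord: an unordered pair of distinct vertices of `ZMod n` that is not an
edge of the standard `n`-cycle. -/
def IsChord (n : ℕ) (e : Sym2 (ZMod n)) : Prop :=
  ¬ e.IsDiag ∧ ¬ IsCycleEdge n e

/-- Two chords cross if exactly one endpoint of the second lies strictly between
the endpoints of the first (traversing in the direction of increasing residues). -/
def Cross (n : ℕ) (e f : Sym2 (ZMod n)) : Prop :=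
  ∀ a b c d : ZMod n, e = s(a, b) → f = s(c, d) →
    Xor' (Between n a b c) (Between n a b d)

/-- `S` is a set of pairwise non-crossing chords of the standard `n`-cycle. -/
def NonCrossingChords (n : ℕ) (S : Set (Sym2 (ZMod n))) : Prop :=
  (∀ e ∈ S, IsChord n e) ∧ ∀ e ∈ S, ∀ f ∈ S, e ≠ f → ¬ Cross n e f

/-- The chord graph of a set `S` of chords: the simple graph on `ZMod n`
whose edge set is `S`. -/
def chordGraph (n : ℕ) (S : Set (Sym2 (ZMod n))) : SimpleGraph (ZMod n) :=
  SimpleGraph.fromEdgeSet S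

/-- A vertex is chord-free for `S` if it is incident to no chord of `S`. -/
def ChordFree (n : ℕ) (S : Set (Sym2 (ZMod n))) (v : ZMod n) : Prop :=
  ∀ e ∈ S, v ∉ e

/-- An outerplane graph on `n` vertices: a simple graph on `ZMod n` whose edge
set is the (disjoint) union of the standard `n`-cycle and a set of pairwise
non-crossing chords. -/
def IsOuterplane (n : ℕ) (G : SimpleGraph (ZMod n)) : Prop :=
  ∃ S : Set (Sym2 (ZMod n)), NonCrossingChords n S ∧
    G.edgeSet = {e | IsCycleEdge n e} ∪ S

/-- The multiset of vertex degrees of a graph on a finite vertex type. -/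
noncomputable def degMultiset {V : Type*} [Fintype V] (G : SimpleGraph V) : Multiset ℕ := by
  classical exact Finset.univ.val.map fun v => G.degree v

/-- The multiset of vertex degrees of a graph on `ZMod n` (junk value for `n = 0`). -/
noncomputable def degreeMultiset (n : ℕ) (G : SimpleGraph (ZMod n)) : Multiset ℕ :=
  if h : n = 0 then 0
  else by haveI : NeZero n := ⟨h⟩; exact degMultiset G

/-- `M` is outerplane-unigraphic on `n` vertices: there is an outerplane graph on
`n` vertices with degree multiset `M`, and any two such are isomorphic. -/
def OuterplaneUnigraphic (n : ℕ) (M : Multiset ℕ) : Prop :=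
  (∃ G : SimpleGraph (ZMod n), IsOuterplane n G ∧ degreeMultiset n G = M) ∧
  ∀ G G' : SimpleGraph (ZMod n), IsOuterplane n G → IsOuterplane n G' →
    degreeMultiset n G = M → degreeMultiset n G' = M → Nonempty (G ≃g G')

/-- A caterpillar: a connected acyclic graph (tree) in which all vertices of
degree at least two lie on a common path. -/
def IsCaterpillar {V : Type*} (G : SimpleGraph V) : Prop :=
  G.Connected ∧ G.IsAcyclic ∧
    ∃ (u w : V) (p : G.Walk u w), p.IsPath ∧
      ∀ v : V, (∃ a b : V, a ≠ b ∧ G.Adj v a ∧ G.Adj v b) → v ∈ p.support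

/-!
In an outerplane graph with these degrees every vertex lies on at most one chord, so the chords are
the two-element orbits of an involution `f` of the cycle with exactly two fixed points. Innermost
chords show that each side of a chord contains a fixed point. Cut the cycle open at one fixed point
`u` and look at the remaining interval `[p, q]`, which contains the other one: unless `p` and `q`
are matched, their chords span disjoint subintervals, each containing a fixed point, which is one
too many. Hence `f p = q`, and peeling off this chord and repeating shows that `f` is the
reflection about `u`. So the graph is determined by `u`, and translations identify all choices.
Conversely, for even `n` a reflection about a vertex fixes exactly two vertices, never swaps
neighbours, and its chords are parallel.
-/

open Function Set

section Involution

variable {V : Type*} {f : V → V}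

/-- The unordered pairs `{v, f v}` with `f v ≠ v`. For an involution `f` these are its two-element
orbits, i.e. the edges of a matching whose unmatched vertices are the fixed points of `f`. -/
def movedPairs (f : V → V) : Set (Sym2 V) :=
  {e | ∃ v, f v ≠ v ∧ e = s(v, f v)}

lemma mk_mem_movedPairs (hf : Involutive f) {x y : V} :
    s(x, y) ∈ movedPairs f ↔ x ≠ y ∧ f x = y := by
  constructor
  · rintro ⟨v, hv, he⟩
    rcases Sym2.eq_iff.1 he with ⟨rfl, rfl⟩ | ⟨rfl, rfl⟩
    · exact ⟨hv.symm, rfl⟩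
    · exact ⟨hv, hf y⟩
  · rintro ⟨hne, rfl⟩
    exact ⟨x, hne.symm, rfl⟩

lemma exists_involutive_edgeSet_eq_movedPairs (H : SimpleGraph V)
    (hH : ∀ v, (H.neighborSet v).Subsingleton) :
    ∃ f : V → V, Involutive f ∧ H.edgeSet = movedPairs f := by
  have exists_partner (v : V) : ∃ y, ∀ z, H.Adj v z ↔ v ≠ z ∧ y = z := by
    rcases (hH v).eq_empty_or_singleton with h | ⟨y, h⟩
    · refine ⟨v, fun z ↦ iff_of_false ?_ fun hz ↦ hz.1 hz.2⟩
      rw [← SimpleGraph.mem_neighborSet, h]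
      exact notMem_empty z
    · have adj_iff (z : V) : H.Adj v z ↔ z = y := by
        rw [← SimpleGraph.mem_neighborSet, h, mem_singleton_iff]
      refine ⟨y, fun z ↦ ⟨fun hz ↦ ⟨hz.ne, ((adj_iff z).1 hz).symm⟩, fun hz ↦ ?_⟩⟩
      exact (adj_iff z).2 hz.2.symm
  choose f hf using exists_partner
  have hinv : Involutive f := fun v ↦ by
    by_cases hv : v = f v
    · rw [← hv, ← hv]
    · exact ((hf (f v) v).1 ((hf v (f v)).2 ⟨hv, rfl⟩).symm).2
  refine ⟨f, hinv, Set.ext fun e ↦ ?_⟩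
  induction e using Sym2.ind with
  | _ x y => rw [SimpleGraph.mem_edgeSet, hf, mk_mem_movedPairs hinv]

end Involution

section Degrees

variable {n : ℕ} {G : SimpleGraph (ZMod n)} {S : Set (Sym2 (ZMod n))}

lemma degreeMultiset_eq_map_ncard [NeZero n] (G : SimpleGraph (ZMod n)) :
    degreeMultiset n G = Finset.univ.val.map fun v ↦ (G.neighborSet v).ncard := by
  rw [degreeMultiset, dif_neg (NeZero.ne n), degMultiset]
  congr! 2 with v
  classical rw [← SimpleGraph.card_neighborSet_eq_degree, ← Nat.card_eq_fintype_card,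
    Nat.card_coe_set_eq]

lemma isCycleEdge_mk {x y : ZMod n} : IsCycleEdge n s(x, y) ↔ y = x + 1 ∨ x = y + 1 := by
  constructor
  · rintro ⟨i, hi⟩
    rcases Sym2.eq_iff.1 hi with ⟨rfl, rfl⟩ | ⟨rfl, rfl⟩
    · exact .inl rfl
    · exact .inr rfl
  · rintro (rfl | rfl)
    · exact ⟨x, rfl⟩
    · exact ⟨y, Sym2.eq_swap⟩

lemma edgeSet_chordGraph (hS : ∀ e ∈ S, IsChord n e) : (chordGraph n S).edgeSet = S := by
  rw [chordGraph, SimpleGraph.edgeSet_fromEdgeSet, sdiff_eq_left, Set.disjoint_left]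
  exact fun e he ↦ (hS e he).1

lemma neighborSet_eq_union_chordGraph (hS : ∀ e ∈ S, IsChord n e)
    (hG : G.edgeSet = {e | IsCycleEdge n e} ∪ S) (v : ZMod n) :
    G.neighborSet v = {v + 1, v - 1} ∪ (chordGraph n S).neighborSet v := by
  ext y
  rw [SimpleGraph.mem_neighborSet, ← SimpleGraph.mem_edgeSet, hG, mem_union, mem_ofPred_eq,
    isCycleEdge_mk, mem_union, SimpleGraph.mem_neighborSet, ← SimpleGraph.mem_edgeSet,
    edgeSet_chordGraph hS, mem_insert_iff, mem_singleton_iff, eq_sub_iff_add_eq, eq_comm (a := v)]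

lemma add_one_ne_sub_one (hn : 3 ≤ n) (v : ZMod n) : v + 1 ≠ v - 1 := by
  intro h
  have two_eq_zero : ((2 : ℕ) : ZMod n) = 0 := by
    push_cast
    linear_combination h
  exact absurd (Nat.le_of_dvd two_pos ((ZMod.natCast_eq_zero_iff 2 n).1 two_eq_zero)) (by lia)

lemma ncard_neighborSet_eq_ncard_chordGraph_add_two (hn : 3 ≤ n) (hS : ∀ e ∈ S, IsChord n e)
    (hG : G.edgeSet = {e | IsCycleEdge n e} ∪ S) (v : ZMod n) :
    (G.neighborSet v).ncard = ((chordGraph n S).neighborSet v).ncard + 2 := by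
  have : NeZero n := ⟨by lia⟩
  have hdisj : Disjoint {v + 1, v - 1} ((chordGraph n S).neighborSet v) := by
    rw [Set.disjoint_left]
    intro y hy hvy
    rw [SimpleGraph.mem_neighborSet, ← SimpleGraph.mem_edgeSet, edgeSet_chordGraph hS] at hvy
    refine (hS _ hvy).2 (isCycleEdge_mk.2 ?_)
    rcases hy with rfl | rfl
    · exact .inl rfl
    · exact .inr (sub_add_cancel v 1).symm
  rw [neighborSet_eq_union_chordGraph hS hG, ncard_union_eq hdisj,
    ncard_pair (add_one_ne_sub_one hn v), add_comm]

open Classical in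
lemma ncard_neighborSet_eq_ite {f : ZMod n → ZMod n} (hn : 3 ≤ n) (hf : Involutive f)
    (hS : ∀ e ∈ movedPairs f, IsChord n e)
    (hG : G.edgeSet = {e | IsCycleEdge n e} ∪ movedPairs f) (v : ZMod n) :
    (G.neighborSet v).ncard = if f v = v then 2 else 3 := by
  have adj_iff (y : ZMod n) : (chordGraph n (movedPairs f)).Adj v y ↔ v ≠ y ∧ f v = y := by
    rw [← SimpleGraph.mem_edgeSet, edgeSet_chordGraph hS, mk_mem_movedPairs hf]
  rw [ncard_neighborSet_eq_ncard_chordGraph_add_two hn hS hG]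
  split_ifs with hv
  · have : (chordGraph n (movedPairs f)).neighborSet v = ∅ :=
      eq_empty_of_forall_notMem fun y hy ↦
        ((adj_iff y).1 hy).1 (hv.symm.trans ((adj_iff y).1 hy).2)
    rw [this, ncard_empty]
  · have : (chordGraph n (movedPairs f)).neighborSet v = {f v} :=
      Set.ext fun y ↦ (adj_iff y).trans
        ⟨fun hy ↦ hy.2.symm, fun hy ↦ ⟨fun h ↦ hv (hy.symm.trans h.symm), hy.symm⟩⟩
    rw [this, ncard_singleton]

lemma map_univ_ite_eq_replicate {α β : Type*} [Fintype α] (p : α → Prop) [DecidablePred p]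
    (a b : β) :
    (Finset.univ.val.map fun x ↦ if p x then a else b) =
      Multiset.replicate (Fintype.card α - {x | p x}.ncard) b +
        Multiset.replicate {x | p x}.ncard a := by
  have hcard : {x | p x}.ncard = (Finset.univ.filter p).card := by
    rw [← ncard_coe_finset, Finset.coe_filter_univ]
  have hcard_not : Fintype.card α - {x | p x}.ncard = (Finset.univ.filter (¬ p ·)).card := by
    rw [hcard, ← Finset.card_univ, ← Finset.card_filter_add_card_filter_not p,
      Nat.add_sub_cancel_left]
  have map_filter (q : α → Prop) [DecidablePred q] (c : β)
      (h : ∀ x, q x → (if p x then a else b) = c) :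
      (Multiset.filter q Finset.univ.val).map (fun x ↦ if p x then a else b) =
        Multiset.replicate (Finset.univ.filter q).card c := by
    rw [Multiset.map_congr rfl fun x hx ↦ h x (Multiset.mem_filter.1 hx).2, Multiset.map_const']
    rfl
  rw [hcard_not, hcard, ← map_filter p a fun x hx ↦ if_pos hx,
    ← map_filter (¬ p ·) b fun x hx ↦ if_neg hx, add_comm, ← Multiset.map_add,
    Multiset.filter_add_not]

lemma degreeMultiset_eq_of_edgeSet_eq_movedPairs {f : ZMod n → ZMod n} (hn : 3 ≤ n)
    (hf : Involutive f) (hS : ∀ e ∈ movedPairs f, IsChord n e)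
    (hG : G.edgeSet = {e | IsCycleEdge n e} ∪ movedPairs f) :
    degreeMultiset n G = Multiset.replicate (n - (fixedPoints f).ncard) 3 +
      Multiset.replicate (fixedPoints f).ncard 2 := by
  classical
  have : NeZero n := ⟨by lia⟩
  rw [degreeMultiset_eq_map_ncard,
    Multiset.map_congr rfl fun v _ ↦ ncard_neighborSet_eq_ite hn hf hS hG v,
    map_univ_ite_eq_replicate, ZMod.card]
  rfl

lemma exists_involutive_of_degreeMultiset_eq_replicate {k l : ℕ} (hn : 3 ≤ n)
    (hS : ∀ e ∈ S, IsChord n e) (hG : G.edgeSet = {e | IsCycleEdge n e} ∪ S)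
    (hdeg : degreeMultiset n G = Multiset.replicate k 3 + Multiset.replicate l 2) :
    ∃ f : ZMod n → ZMod n, Involutive f ∧ S = movedPairs f ∧ (fixedPoints f).ncard = l := by
  have : NeZero n := ⟨by lia⟩
  have hle (v : ZMod n) : ((chordGraph n S).neighborSet v).ncard ≤ 1 := by
    have hmem : (G.neighborSet v).ncard ∈ degreeMultiset n G := by
      rw [degreeMultiset_eq_map_ncard]
      exact Multiset.mem_map_of_mem _ (Finset.mem_univ v)
    have hcard := ncard_neighborSet_eq_ncard_chordGraph_add_two hn hS hG v
    rw [hdeg, Multiset.mem_add] at hmem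
    rcases hmem with h | h <;> have := Multiset.eq_of_mem_replicate h <;> lia
  obtain ⟨f, hf, hSf⟩ := exists_involutive_edgeSet_eq_movedPairs (chordGraph n S)
    fun v ↦ ncard_le_one_iff_subsingleton.1 (hle v)
  rw [edgeSet_chordGraph hS] at hSf
  subst hSf
  refine ⟨f, hf, rfl, ?_⟩
  have hcount := congrArg (Multiset.count 2)
    ((degreeMultiset_eq_of_edgeSet_eq_movedPairs hn hf hS hG).symm.trans hdeg)
  simpa [Multiset.count_replicate] using hcount

end Degrees

section CyclicOrder

variable {n : ℕ} [NeZero n]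

lemma zmod_val_sub_eq_ite (x y : ZMod n) :
    (x - y).val = if y.val ≤ x.val then x.val - y.val else x.val + n - y.val := by
  split_ifs with h
  · exact ZMod.val_sub h
  · have hyx : (y - x).val = y.val - x.val := ZMod.val_sub (by lia)
    have : NeZero (y - x) := ⟨fun h0 ↦ by rw [h0, ZMod.val_zero] at hyx; lia⟩
    have := ZMod.val_lt y
    rw [← neg_sub y x, ZMod.val_neg_of_ne_zero, hyx]
    lia

lemma between_iff_of_val_sub_le {u a b c : ZMod n} (hab : (a - u).val ≤ (b - u).val) :
    Between n a b c ↔ (a - u).val < (c - u).val ∧ (c - u).val < (b - u).val := by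
  rw [Between, ← sub_sub_sub_cancel_right c a u, ← sub_sub_sub_cancel_right b a u,
    zmod_val_sub_eq_ite (c - u), zmod_val_sub_eq_ite (b - u)]
  have := ZMod.val_lt (a - u)
  have := ZMod.val_lt (b - u)
  have := ZMod.val_lt (c - u)
  split_ifs <;> lia

lemma between_swap_iff_not_between {a b c : ZMod n} (hab : a ≠ b) (hca : c ≠ a) (hcb : c ≠ b) :
    Between n b a c ↔ ¬ Between n a b c := by
  have val_sub_pos {x y : ZMod n} (h : x ≠ y) : 0 < (x - y).val :=
    Nat.pos_of_ne_zero fun h0 ↦ h (sub_eq_zero.1 ((ZMod.val_eq_zero _).1 h0))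
  have hcb_pos := val_sub_pos hcb
  have hab_pos := val_sub_pos hab
  have hca_pos := val_sub_pos hca
  have := ZMod.val_lt (c - a)
  rw [← sub_sub_sub_cancel_right c b a, zmod_val_sub_eq_ite] at hcb_pos
  rw [← sub_sub_sub_cancel_right a b a, zmod_val_sub_eq_ite, sub_self, ZMod.val_zero] at hab_pos
  rw [Between, Between, ← sub_sub_sub_cancel_right c b a, ← sub_sub_sub_cancel_right a b a,
    zmod_val_sub_eq_ite (c - a), zmod_val_sub_eq_ite (a - a), sub_self, ZMod.val_zero]
  split_ifs at * <;> lia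

lemma between_const_sub_iff (r a b c : ZMod n) :
    Between n (r - b) (r - a) (r - c) ↔ Between n a b c := by
  rw [Between, Between, sub_sub_sub_cancel_left, sub_sub_sub_cancel_left,
    ← sub_sub_sub_cancel_right b c a, zmod_val_sub_eq_ite]
  have := ZMod.val_lt (b - a)
  have := ZMod.val_lt (c - a)
  split_ifs <;> lia

lemma cross_mk_iff {a b c d : ZMod n} (hab : a ≠ b) (hca : c ≠ a) (hcb : c ≠ b) (hda : d ≠ a)
    (hdb : d ≠ b) :
    Cross n s(a, b) s(c, d) ↔ Xor (Between n a b c) (Between n a b d) := by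
  refine ⟨fun h ↦ h a b c d rfl rfl, fun h a' b' c' d' he hf ↦ ?_⟩
  rcases Sym2.eq_iff.1 he with ⟨rfl, rfl⟩ | ⟨rfl, rfl⟩ <;>
    rcases Sym2.eq_iff.1 hf with ⟨rfl, rfl⟩ | ⟨rfl, rfl⟩
  · exact h
  · exact h.symm
  · rw [between_swap_iff_not_between hab hca hcb, between_swap_iff_not_between hab hda hdb]
    exact xor_not_not.2 h
  · rw [between_swap_iff_not_between hab hca hcb, between_swap_iff_not_between hab hda hdb]
    exact xor_not_not.2 h.symm

lemma nonCrossingChords_movedPairs_iff {f : ZMod n → ZMod n} (hf : Involutive f) :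
    NonCrossingChords n (movedPairs f) ↔ (∀ v, f v ≠ v → f v ≠ v + 1) ∧
      ∀ a c, Between n a (f a) c → Between n a (f a) (f c) := by
  constructor
  · refine fun ⟨hchord, hnc⟩ ↦ ⟨fun v hv h ↦ ?_, fun a c hac ↦ ?_⟩
    · exact (hchord _ ⟨v, hv, rfl⟩).2 (isCycleEdge_mk.2 (.inl h))
    by_cases hc : f c = c
    · rwa [hc]
    have ha : f a ≠ a := fun h ↦ by simp [Between, h] at hac
    have hca : c ≠ a := fun h ↦ by simp [Between, h] at hac
    have hcfa : c ≠ f a := fun h ↦ by simp [Between, h] at hac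
    have hfca : f c ≠ a := fun h ↦ hcfa (by rw [← h, hf])
    have hne : s(a, f a) ≠ s(c, f c) := fun h ↦ by
      rcases Sym2.eq_iff.1 h with ⟨h, _⟩ | ⟨h, _⟩
      exacts [hca h.symm, hfca h.symm]
    by_contra hbetween
    exact hnc _ ⟨a, ha, rfl⟩ _ ⟨c, hc, rfl⟩ hne
      ((cross_mk_iff ha.symm hca hcfa hfca (hf.injective.ne hca)).2 (.inl ⟨hac, hbetween⟩))
  · refine fun ⟨hsucc, hnc⟩ ↦ ⟨?_, ?_⟩
    · rintro _ ⟨v, hv, rfl⟩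
      refine ⟨fun h ↦ hv (Sym2.mk_isDiag_iff.1 h).symm, fun h ↦ ?_⟩
      rcases isCycleEdge_mk.1 h with h | h
      · exact hsucc v hv h
      · exact hsucc (f v) (by rwa [hf, ne_comm]) (by rwa [hf])
    · rintro _ ⟨a, -, rfl⟩ _ ⟨c, -, rfl⟩ - hcross
      have h_iff : Between n a (f a) c ↔ Between n a (f a) (f c) :=
        ⟨hnc a c, fun h ↦ hf c ▸ hnc a (f c) h⟩
      exact xor_iff_not_iff _ _ |>.1 (hcross a (f a) c (f c) rfl rfl) h_iff

end CyclicOrder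

/-- `g` restricts to an involution of the interval `[p, q]` whose arcs `{i, g i}` are pairwise
non-crossing and never join consecutive integers. Non-crossing is encoded as: `g` preserves the
points strictly under each arc. -/
structure IsNoncrossingInvolOn (g : ℕ → ℕ) (p q : ℕ) : Prop where
  mapsTo : MapsTo g (Icc p q) (Icc p q)
  apply_apply : ∀ i ∈ Icc p q, g (g i) = i
  apply_ne_succ : ∀ i ∈ Icc p q, g i ≠ i + 1
  mapsTo_Ioo : ∀ i ∈ Icc p q, MapsTo g (Ioo i (g i)) (Ioo i (g i))

namespace IsNoncrossingInvolOn

variable {g : ℕ → ℕ} {p q i : ℕ}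

lemma mono (h : IsNoncrossingInvolOn g p q) {p' q' : ℕ} (hsub : Icc p' q' ⊆ Icc p q)
    (hmaps : MapsTo g (Icc p' q') (Icc p' q')) : IsNoncrossingInvolOn g p' q' where
  mapsTo := hmaps
  apply_apply i hi := h.apply_apply i (hsub hi)
  apply_ne_succ i hi := h.apply_ne_succ i (hsub hi)
  mapsTo_Ioo i hi := h.mapsTo_Ioo i (hsub hi)

lemma restrict_under_arc (h : IsNoncrossingInvolOn g p q) (hi : i ∈ Icc p q) (hlt : i < g i) :
    IsNoncrossingInvolOn g (i + 1) (g i - 1) := by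
  have hIcc : Icc (i + 1) (g i - 1) = Ioo i (g i) := by
    ext j
    simp only [mem_Icc, mem_Ioo]
    lia
  refine h.mono (hIcc ▸ Ioo_subset_Icc_self.trans ?_) (hIcc ▸ h.mapsTo_Ioo i hi)
  exact Icc_subset_Icc hi.1 (h.mapsTo hi).2

lemma exists_fixed {g : ℕ → ℕ} {p q : ℕ} (h : IsNoncrossingInvolOn g p q) (hpq : p ≤ q) :
    ∃ i ∈ Icc p q, g i = i := by
  have hp : p ∈ Icc p q := left_mem_Icc.2 hpq
  have hgp := h.mapsTo hp
  have hsucc := h.apply_ne_succ p hp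
  rcases hgp.1.eq_or_lt with heq | hlt
  · exact ⟨p, hp, heq.symm⟩
  · have hle : p + 1 ≤ g p - 1 := by lia
    obtain ⟨i, hi, hfix⟩ := (h.restrict_under_arc hp hlt).exists_fixed hle
    exact ⟨i, ⟨by have := hi.1; lia, by have := hi.2; have := hgp.2; lia⟩, hfix⟩
termination_by q - p
decreasing_by have := hgp.2; lia

lemma exists_fixed_under_arc (h : IsNoncrossingInvolOn g p q) (hi : i ∈ Icc p q)
    (hle : i ≤ g i) : ∃ j ∈ Icc i (g i), g j = j := by
  rcases hle.eq_or_lt with heq | hlt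
  · exact ⟨i, ⟨le_rfl, hle⟩, heq.symm⟩
  · have := h.apply_ne_succ i hi
    obtain ⟨j, ⟨hij, hji⟩, hfix⟩ := (h.restrict_under_arc hi hlt).exists_fixed (by lia)
    exact ⟨j, ⟨by lia, by lia⟩, hfix⟩

-- If `g p < q`, the arcs at `p` and at `q` span disjoint intervals, each with its own fixed point.
lemma apply_left_eq_right (h : IsNoncrossingInvolOn g p q) (hpq : p ≤ q)
    (huniq : (Icc p q ∩ fixedPoints g).Subsingleton) : g p = q := by
  have hp : p ∈ Icc p q := left_mem_Icc.2 hpq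
  have hq : q ∈ Icc p q := right_mem_Icc.2 hpq
  obtain ⟨hp_le, hp_ge⟩ := h.mapsTo hp
  obtain ⟨hq_ge, hq_le⟩ := h.mapsTo hq
  have hggp := h.apply_apply p hp
  have hggq := h.apply_apply q hq
  by_contra hne
  have hlt : g p < g q := by
    by_contra! hle
    rcases hle.eq_or_lt with heq | hlt
    · exact hne (by rw [← hggq, heq, hggp]; lia)
    rcases hq_ge.eq_or_lt with heq | hgt
    · exact hne (by rw [heq, hggq])
    · have := (h.mapsTo_Ioo p hp ⟨hgt, hlt⟩).2
      lia
  obtain ⟨i, ⟨hpi, hi⟩, hfix_i⟩ := h.exists_fixed_under_arc hp hp_le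
  obtain ⟨j, ⟨hj, hjq⟩, hfix_j⟩ := h.exists_fixed_under_arc (h.mapsTo hq) (hggq.symm ▸ hq_le)
  have := huniq ⟨⟨hpi, hi.trans hp_ge⟩, hfix_i⟩ ⟨⟨hq_ge.trans hj, hggq ▸ hjq⟩, hfix_j⟩
  lia

theorem apply_add_self {g : ℕ → ℕ} {p q : ℕ} (h : IsNoncrossingInvolOn g p q)
    (huniq : (Icc p q ∩ fixedPoints g).Subsingleton) {i : ℕ} (hi : i ∈ Icc p q) :
    g i + i = p + q := by
  obtain ⟨hpi, hiq⟩ := hi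
  have hp : p ∈ Icc p q := ⟨le_rfl, hpi.trans hiq⟩
  have hgp : g p = q := h.apply_left_eq_right hp.2 huniq
  have hgq : g q = p := hgp ▸ h.apply_apply p hp
  rcases hpi.eq_or_lt with rfl | hpi
  · lia
  rcases hiq.eq_or_lt with rfl | hiq
  · lia
  have hinner : IsNoncrossingInvolOn g (p + 1) (q - 1) :=
    hgp ▸ h.restrict_under_arc hp (by lia)
  have := hinner.apply_add_self
    (huniq.anti (inter_subset_inter_left _ (Icc_subset_Icc (by lia) (by lia))))
    (i := i) ⟨by lia, by lia⟩
  lia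
termination_by q - p

end IsNoncrossingInvolOn

lemma pointReflection_eq_add_self_sub {A : Type*} [AddCommGroup A] (u v : A) :
    Equiv.pointReflection u v = u + u - v := by
  rw [Equiv.pointReflection_apply, vsub_eq_sub, vadd_eq_add, sub_add_eq_add_sub]

section Rigidity

variable {n : ℕ} [NeZero n] {f : ZMod n → ZMod n} {u : ZMod n}

/-- The self-map of `{0, …, n - 1}` that corresponds to `f` when the vertices of the cycle are
numbered by their distance from `u`. -/
def offsetMap (f : ZMod n → ZMod n) (u : ZMod n) (i : ℕ) : ℕ :=
  (f (u + i) - u).val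

lemma offsetMap_lt (f : ZMod n → ZMod n) (u : ZMod n) (i : ℕ) : offsetMap f u i < n :=
  ZMod.val_lt _

lemma add_offsetMap (f : ZMod n → ZMod n) (u : ZMod n) (i : ℕ) :
    u + offsetMap f u i = f (u + i) := by
  rw [offsetMap, ZMod.natCast_zmod_val, add_sub_cancel]

lemma offsetMap_eq_iff {i j : ℕ} (hj : j < n) : offsetMap f u i = j ↔ f (u + i) = u + j := by
  rw [← add_offsetMap f, add_right_inj, ZMod.natCast_eq_natCast_iff', Nat.mod_eq_of_lt hj,
    Nat.mod_eq_of_lt (offsetMap_lt f u i)]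

lemma between_add_natCast_iff {i j k : ℕ} (hik : i ≤ k) (hj : j < n) (hk : k < n) :
    Between n (u + i) (u + k) (u + j) ↔ i < j ∧ j < k := by
  have val_eq {l : ℕ} (hl : l < n) : (u + (l : ZMod n) - u).val = l := by
    rw [add_sub_cancel_left, ZMod.val_natCast_of_lt hl]
  have hi : i < n := hik.trans_lt hk
  rw [between_iff_of_val_sub_le (u := u) (by rwa [val_eq hi, val_eq hk]), val_eq hi, val_eq hj,
    val_eq hk]

lemma isNoncrossingInvolOn_offsetMap (hf : Involutive f)
    (hS : NonCrossingChords n (movedPairs f)) (hu : f u = u) :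
    IsNoncrossingInvolOn (offsetMap f u) 1 (n - 1) := by
  obtain ⟨hsucc, hnc⟩ := (nonCrossingChords_movedPairs_iff hf).1 hS
  have hlt := offsetMap_lt f u
  have hinv {i : ℕ} (hi : i < n) : offsetMap f u (offsetMap f u i) = i := by
    rw [offsetMap_eq_iff hi, add_offsetMap, hf]
  have hzero : offsetMap f u 0 = 0 := by
    rw [offsetMap_eq_iff (NeZero.pos n), Nat.cast_zero, add_zero, hu]
  constructor
  · intro i ⟨hi, hin⟩
    refine ⟨Nat.pos_of_ne_zero fun h ↦ ?_, Nat.le_sub_one_of_lt (hlt i)⟩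
    have := hinv (i := i) (by lia)
    rw [h, hzero] at this
    lia
  · exact fun i ⟨hi, hin⟩ ↦ hinv (by lia)
  · intro i ⟨hi, hin⟩ h
    have hi_lt : i < n := by lia
    have hne : f (u + i) ≠ u + i := fun h' ↦ by
      have := (offsetMap_eq_iff hi_lt).2 h'
      lia
    refine hsucc _ hne ?_
    rw [← add_offsetMap f, h, Nat.cast_succ, add_assoc]
  · intro i _ j hj
    have hle : i ≤ offsetMap f u i := (hj.1.trans hj.2).le
    have hbetween := hnc (u + i) (u + j)
    rw [← add_offsetMap f u i, ← add_offsetMap f u j,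
      between_add_natCast_iff hle (hj.2.trans (hlt i)) (hlt i),
      between_add_natCast_iff hle (hlt j) (hlt i)] at hbetween
    exact hbetween hj

lemma subsingleton_fixedPoints_offsetMap {w : ZMod n} (hfix : fixedPoints f = {u, w}) :
    (Icc 1 (n - 1) ∩ fixedPoints (offsetMap f u)).Subsingleton := by
  have eq_val_sub {i : ℕ} (hi : i ∈ Icc 1 (n - 1) ∩ fixedPoints (offsetMap f u)) :
      i = (w - u).val := by
    obtain ⟨⟨hpos, hle⟩, hi⟩ := hi
    have hlt : i < n := by lia
    have hmem : u + (i : ZMod n) ∈ fixedPoints f := (offsetMap_eq_iff hlt).1 hi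
    rw [hfix] at hmem
    rcases hmem with h | h
    · have := congrArg ZMod.val (add_eq_left.1 h)
      rw [ZMod.val_natCast_of_lt hlt, ZMod.val_zero] at this
      lia
    · rw [← mem_singleton_iff.1 h, add_sub_cancel_left, ZMod.val_natCast_of_lt hlt]
  exact fun i hi j hj ↦ (eq_val_sub hi).trans (eq_val_sub hj).symm

theorem eq_pointReflection_of_nonCrossingChords {w : ZMod n} (hf : Involutive f)
    (hS : NonCrossingChords n (movedPairs f)) (hfix : fixedPoints f = {u, w}) :
    f = Equiv.pointReflection u := by
  have hu : f u = u := hfix.symm.subset (mem_insert u {w})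
  funext v
  rw [pointReflection_eq_add_self_sub]
  rcases eq_or_ne v u with rfl | hv
  · rw [hu, add_sub_cancel_right]
  have hpos : (v - u).val ≠ 0 := fun h ↦ hv (sub_eq_zero.1 ((ZMod.val_eq_zero _).1 h))
  have hlt := ZMod.val_lt (v - u)
  have hsum := (isNoncrossingInvolOn_offsetMap hf hS hu).apply_add_self
    (subsingleton_fixedPoints_offsetMap hfix) (i := (v - u).val) ⟨by lia, by lia⟩
  rw [show 1 + (n - 1) = n by lia] at hsum
  have hcast := congrArg (Nat.cast (R := ZMod n)) hsum
  have hfv := add_offsetMap f u (v - u).val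
  rw [Nat.cast_add, ZMod.natCast_self, ZMod.natCast_zmod_val] at hcast
  rw [ZMod.natCast_zmod_val, add_sub_cancel] at hfv
  linear_combination hcast - hfv

end Rigidity

section CappedLadder

variable {n : ℕ}


/-- The `n`-cycle together with all chords `{u + i, u - i}`. For even `n` this is a ladder with a
triangle glued to each end, the apexes being `u` and `u + n / 2`. -/
def cappedLadder (n : ℕ) (u : ZMod n) : SimpleGraph (ZMod n) :=
  SimpleGraph.fromEdgeSet ({e | IsCycleEdge n e} ∪ movedPairs (Equiv.pointReflection u))

lemma cappedLadder_adj {u x y : ZMod n} :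
    (cappedLadder n u).Adj x y ↔ (y = x + 1 ∨ x = y + 1 ∨ x + y = u + u) ∧ x ≠ y := by
  have hreflect : Equiv.pointReflection u x = y ↔ x + y = u + u := by
    rw [pointReflection_eq_add_self_sub, sub_eq_iff_eq_add', eq_comm]
  rw [cappedLadder, SimpleGraph.fromEdgeSet_adj, mem_union, mem_ofPred_eq, isCycleEdge_mk,
    mk_mem_movedPairs (Equiv.pointReflection_involutive u), hreflect]
  tauto

/-- Translation by `u' - u`. -/
def cappedLadderIso (u u' : ZMod n) : cappedLadder n u ≃g cappedLadder n u' where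
  toEquiv := Equiv.addRight (u' - u)
  map_rel_iff' {x y} := by
    have hsum : x + (u' - u) + (y + (u' - u)) = u' + u' ↔ x + y = u + u := by
      constructor <;> intro h <;> linear_combination h
    simp only [cappedLadder_adj, Equiv.coe_addRight, hsum, add_right_comm _ (u' - u) 1,
      add_left_inj, ne_eq]

lemma edgeSet_cappedLadder [Fact (1 < n)] {u : ZMod n} : (cappedLadder n u).edgeSet =
    {e | IsCycleEdge n e} ∪ movedPairs (Equiv.pointReflection u) := by
  rw [cappedLadder, SimpleGraph.edgeSet_fromEdgeSet, sdiff_eq_left, Set.disjoint_left]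
  rintro e (⟨i, rfl⟩ | ⟨v, hv, rfl⟩) hdiag
  · exact one_ne_zero (left_eq_add.1 (Sym2.mk_isDiag_iff.1 hdiag))
  · exact hv (Sym2.mk_isDiag_iff.1 hdiag).symm

lemma add_self_ne_one_of_even (hn : Even n) (x : ZMod n) : x + x ≠ 1 := by
  intro h
  have h_mod_two := congrArg (ZMod.castHom hn.two_dvd (ZMod 2)) h
  rw [map_add, CharTwo.add_self_eq_zero, map_one] at h_mod_two
  exact zero_ne_one h_mod_two

lemma nonCrossingChords_pointReflection [NeZero n] (hn : Even n) (u : ZMod n) :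
    NonCrossingChords n (movedPairs (Equiv.pointReflection u)) := by
  refine (nonCrossingChords_movedPairs_iff (Equiv.pointReflection_involutive u)).2
    ⟨fun v _ h ↦ ?_, fun a c h ↦ ?_⟩
  · rw [pointReflection_eq_add_self_sub] at h
    exact add_self_ne_one_of_even hn (u - v) (by linear_combination h)
  · rwa [← between_const_sub_iff (u + u), ← pointReflection_eq_add_self_sub,
      ← pointReflection_eq_add_self_sub, ← pointReflection_eq_add_self_sub,
      Equiv.pointReflection_involutive u a] at h

lemma ncard_fixedPoints_pointReflection [NeZero n] (hn : Even n) (u : ZMod n) :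
    (fixedPoints (Equiv.pointReflection u)).ncard = 2 := by
  obtain ⟨m, rfl⟩ := hn
  have hpos := NeZero.pos (m + m)
  have hval : ((m : ZMod (m + m))).val = m := ZMod.val_natCast_of_lt (by lia)
  have mem_iff (v : ZMod (m + m)) :
      v ∈ fixedPoints (Equiv.pointReflection u) ↔ v = u ∨ v = u + m := by
    calc
      _ ↔ -(v - u) = v - u := by
        rw [mem_fixedPoints, IsFixedPt, pointReflection_eq_add_self_sub, neg_sub,
          eq_sub_iff_add_eq, sub_add_eq_add_sub]
      _ ↔ v - u = 0 ∨ (v - u).val = (m : ZMod (m + m)).val := by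
        rw [ZMod.neg_eq_self_iff, hval]
        lia
      _ ↔ v = u ∨ v = u + m := by
        rw [(ZMod.val_injective _).eq_iff, sub_eq_zero, sub_eq_iff_eq_add']
  have hne : u ≠ u + m := fun h ↦ by
    rw [left_eq_add.1 h, ZMod.val_zero] at hval
    lia
  rw [← ncard_pair hne]
  exact congrArg ncard (Set.ext mem_iff)

lemma isOuterplane_cappedLadder (hn : 3 ≤ n) (heven : Even n) (u : ZMod n) :
    IsOuterplane n (cappedLadder n u) :=
  have : NeZero n := ⟨by lia⟩
  have : Fact (1 < n) := ⟨by lia⟩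
  ⟨_, nonCrossingChords_pointReflection heven u, edgeSet_cappedLadder⟩

lemma degreeMultiset_cappedLadder (hn : 3 ≤ n) (heven : Even n) (u : ZMod n) :
    degreeMultiset n (cappedLadder n u) =
      Multiset.replicate (n - 2) 3 + Multiset.replicate 2 2 := by
  have : NeZero n := ⟨by lia⟩
  have : Fact (1 < n) := ⟨by lia⟩
  rw [degreeMultiset_eq_of_edgeSet_eq_movedPairs hn (Equiv.pointReflection_involutive u)
    (nonCrossingChords_pointReflection heven u).1 edgeSet_cappedLadder,
    ncard_fixedPoints_pointReflection heven]

theorem exists_eq_cappedLadder (hn : 3 ≤ n) {k : ℕ} {G : SimpleGraph (ZMod n)}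
    (hG : IsOuterplane n G)
    (hdeg : degreeMultiset n G = Multiset.replicate k 3 + Multiset.replicate 2 2) :
    ∃ u, G = cappedLadder n u := by
  have : NeZero n := ⟨by lia⟩
  obtain ⟨S, hS, hE⟩ := hG
  obtain ⟨f, hf, rfl, hcard⟩ := exists_involutive_of_degreeMultiset_eq_replicate hn hS.1 hE hdeg
  obtain ⟨u, w, -, hfix⟩ := ncard_eq_two.1 hcard
  refine ⟨u, ?_⟩
  rw [cappedLadder, ← eq_pointReflection_of_nonCrossingChords hf hS hfix, ← hE,
    SimpleGraph.fromEdgeSet_edgeSet]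

end CappedLadder

/-- Type A1 of the paper's Theorem 1: for even `n ≥ 4`, the multiset
`{3^(n-2), 2^2}` is outerplane-unigraphic. -/
theorem unigraphic_A1 (n : ℕ) (hn : 4 ≤ n) (heven : Even n) :
    OuterplaneUnigraphic n
      (Multiset.replicate (n - 2) 3 + Multiset.replicate 2 2) := by
  have hn3 : 3 ≤ n := by lia
  refine ⟨⟨cappedLadder n 0, isOuterplane_cappedLadder hn3 heven 0,
    degreeMultiset_cappedLadder hn3 heven 0⟩, fun G G' hG hG' hdeg hdeg' ↦ ?_⟩
  obtain ⟨u, rfl⟩ := exists_eq_cappedLadder hn3 hG hdeg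
  obtain ⟨u', rfl⟩ := exists_eq_cappedLadder hn3 hG' hdeg'
  exact ⟨cappedLadderIso u u'⟩
end

section
/- Let n ≥ 5 and x ≥ 2 be integers such that x−1 divides n−4. Then the multiset {(x+2)^((n−4)/(x−1)), 3^((n−4)(x−2)/(x−1)+2), 2^2} is outerplane-unigraphic: there exists an outerplane graph on n vertices with this degree multiset, and any two outerplane graphs on n vertices with this degree multiset are isomorphic. (Type A3 of the paper's Theorem 1, corresponding to the polytope degree sequence p−1, (x+3)^((p−5)/(x−1)), 4^((p−5)(x−2)/(x−1)+2), 3^2 with p = n+1 ≥ 6.) -/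
/-!
In an outerplane graph both sides of every chord contain a chord-free vertex, that is, a vertex of
degree two. The prescribed degrees sum to `4 n - 6` and leave only two chord-free vertices. Hence
there are `n - 3` chords, and each of them separates these two vertices. Cutting the cycle open at
one of the two turns the chords into a chain of nested intervals, with exactly one interval of each
admissible length. Such a chain is a lattice path: going from one chord to the next shorter one, a
step records which of the two endpoints moves. A vertex that lies on a chord has degree two plus
the number of times at which the moving endpoint on its side rests there.

If these numbers are all `1` or `x`, then after its first step the path is forced: at the first
step where two such paths diverge, the endpoint which has just been resting leaves its vertex in
one path and stays in the other, so it rests there between `2` and `x - 1` times in the former.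
Thus the path alternates between runs of length `x - 1`, and the choice of the first step is
undone by a reflection of the polygon.
-/

section NaturalCoordinates

variable {n : ℕ} {a b c d v : ℕ}

lemma natCast_zmod_inj_of_lt (ha : a < n) (hb : b < n) : (a : ZMod n) = b ↔ a = b := by
  rw [ZMod.natCast_eq_natCast_iff', Nat.mod_eq_of_lt ha, Nat.mod_eq_of_lt hb]

lemma natCast_zmod_eq_add_one_iff (ha : a < n) (hb : b < n) :
    (b : ZMod n) = a + 1 ↔ b = a + 1 ∨ a + 1 = n ∧ b = 0 := by
  rw [← Nat.cast_succ, ZMod.natCast_eq_natCast_iff', Nat.mod_eq_of_lt hb]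
  obtain h | h := (Nat.succ_le_of_lt ha).lt_or_eq
  · rw [Nat.mod_eq_of_lt h]
    omega
  · rw [h, Nat.mod_self]
    omega

lemma val_natCast_sub_natCast [NeZero n] (ha : a < n) (hb : b < n) :
    ((b : ZMod n) - a).val = if a ≤ b then b - a else b + n - a := by
  have key : (b : ZMod n) - a = ((if a ≤ b then b - a else b + n - a : ℕ) : ZMod n) := by
    split_ifs with h
    · rw [Nat.cast_sub h]
    · rw [Nat.cast_sub (by omega), Nat.cast_add, ZMod.natCast_self, add_zero]
  rw [key, ZMod.val_natCast, Nat.mod_eq_of_lt (by split_ifs <;> omega)]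

lemma between_natCast_iff [NeZero n] (ha : a < n) (hb : b < n) (hv : v < n) :
    Between n a b v ↔ a < v ∧ v < b ∨ b < a ∧ a < v ∨ v < b ∧ b < a := by
  rw [Between, val_natCast_sub_natCast ha hv, val_natCast_sub_natCast ha hb]
  split_ifs <;> omega

lemma isCycleEdge_natCast_iff (hab : a < b) (hb : b < n) :
    IsCycleEdge n s((a : ZMod n), (b : ZMod n)) ↔ b = a + 1 ∨ a = 0 ∧ b + 1 = n := by
  have ha : a < n := hab.trans hb
  have key : IsCycleEdge n s((a : ZMod n), (b : ZMod n)) ↔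
      (b : ZMod n) = a + 1 ∨ (a : ZMod n) = b + 1 := by
    simp only [IsCycleEdge, Sym2.eq_iff]
    constructor
    · rintro ⟨i, ⟨rfl, h⟩ | ⟨h, rfl⟩⟩
      exacts [Or.inl h, Or.inr h]
    · rintro (h | h)
      exacts [⟨a, Or.inl ⟨rfl, h⟩⟩, ⟨b, Or.inr ⟨h, rfl⟩⟩]
  rw [key, natCast_zmod_eq_add_one_iff ha hb, natCast_zmod_eq_add_one_iff hb ha]
  omega

lemma isChord_natCast_iff (hab : a < b) (hb : b < n) :
    IsChord n s((a : ZMod n), (b : ZMod n)) ↔ a + 2 ≤ b ∧ ¬ (a = 0 ∧ b + 1 = n) := by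
  rw [IsChord, Sym2.mk_isDiag_iff, natCast_zmod_inj_of_lt (hab.trans hb) hb,
    isCycleEdge_natCast_iff hab hb]
  omega

lemma cross_mk_iff_s4 {u v w z : ZMod n} :
    Cross n s(u, v) s(w, z) ↔
      (Between n u v w ↔ ¬ Between n u v z) ∧ (Between n v u w ↔ ¬ Between n v u z) := by
  constructor
  · intro h
    exact ⟨xor_iff_iff_not.1 (h u v w z rfl rfl), xor_iff_iff_not.1 (h v u w z Sym2.eq_swap rfl)⟩
  · intro h u' v' w' z' huv hwz
    refine xor_iff_iff_not.2 ?_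
    rw [Sym2.eq_iff] at huv hwz
    rcases huv with ⟨rfl, rfl⟩ | ⟨rfl, rfl⟩ <;> rcases hwz with ⟨rfl, rfl⟩ | ⟨rfl, rfl⟩ <;> tauto

lemma cross_natCast_iff (hab : a < b) (hb : b < n) (hcd : c < d) (hd : d < n) :
    Cross n s((a : ZMod n), (b : ZMod n)) s((c : ZMod n), (d : ZMod n)) ↔
      a < c ∧ c < b ∧ b < d ∨ c < a ∧ a < d ∧ d < b := by
  have : NeZero n := ⟨by omega⟩
  have ha : a < n := hab.trans hb
  have hc : c < n := hcd.trans hd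
  rw [cross_mk_iff_s4]
  simp only [between_natCast_iff, ha, hb, hc, hd]
  omega

lemma exists_natCast_lt_of_not_isDiag [NeZero n] {e : Sym2 (ZMod n)} (he : ¬ e.IsDiag) :
    ∃ a b : ℕ, a < b ∧ b < n ∧ e = s((a : ZMod n), (b : ZMod n)) := by
  induction e using Sym2.ind with
  | _ u v =>
  have huv : u.val ≠ v.val := fun h => he (Sym2.mk_isDiag_iff.2 (ZMod.val_injective n h))
  obtain h | h := huv.lt_or_gt
  · exact ⟨u.val, v.val, h, v.val_lt, by simp only [ZMod.natCast_zmod_val]⟩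
  · exact ⟨v.val, u.val, h, u.val_lt, by simp only [ZMod.natCast_zmod_val, Sym2.eq_swap]⟩

lemma mk_natCast_inj (hab : a < b) (hb : b < n) (hcd : c < d) (hd : d < n) :
    s((a : ZMod n), (b : ZMod n)) = s((c : ZMod n), (d : ZMod n)) ↔ a = c ∧ b = d := by
  have ha : a < n := hab.trans hb
  have hc : c < n := hcd.trans hd
  simp only [Sym2.eq_iff, natCast_zmod_inj_of_lt, ha, hb, hc, hd]
  omega

end NaturalCoordinates

section Ears

variable {n : ℕ} {S : Set (Sym2 (ZMod n))} {a b c d : ℕ}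

lemma NonCrossingChords.not_interleaved (hS : NonCrossingChords n S)
    (hab : s((a : ZMod n), (b : ZMod n)) ∈ S) (hcd : s((c : ZMod n), (d : ZMod n)) ∈ S)
    (hd : d < n) : ¬ (a < c ∧ c < b ∧ b < d) := by
  rintro ⟨hac, hcb, hbd⟩
  refine hS.2 _ hab _ hcd ?_ ?_
  · rw [Ne, mk_natCast_inj (by omega) (by omega) (by omega) hd]
    omega
  · rw [cross_natCast_iff (by omega) (by omega) (by omega) hd]
    omega

-- Induct on `b - a`: if `a + 1` is not chord-free, its chord ends inside `(a + 1, b]`.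
lemma NonCrossingChords.exists_chordFree_between (hS : NonCrossingChords n S) (hab : a < b)
    (hb : b < n) (habS : s((a : ZMod n), (b : ZMod n)) ∈ S) :
    ∃ v : ℕ, a < v ∧ v < b ∧ ChordFree n S v := by
  have : NeZero n := ⟨by omega⟩
  induction hlen : b - a using Nat.strong_induction_on generalizing a b with
  | _ len ih =>
  have hlong := (isChord_natCast_iff hab hb).1 (hS.1 _ habS)
  by_cases hfree : ChordFree n S (a + 1 : ℕ)
  · exact ⟨a + 1, by omega, by omega, hfree⟩
  obtain ⟨e, heS, w', rfl⟩ : ∃ e ∈ S, ((a + 1 : ℕ) : ZMod n) ∈ e := by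
    simpa only [ChordFree, not_forall, not_not, exists_prop] using hfree
  obtain ⟨w, hw, rfl⟩ : ∃ w : ℕ, w < n ∧ (w : ZMod n) = w' :=
    ⟨w'.val, w'.val_lt, ZMod.natCast_zmod_val w'⟩
  have hwb : w ≤ b := by
    by_contra! hbw
    exact hS.not_interleaved habS heS hw ⟨by omega, by omega, hbw⟩
  have haw : a + 1 < w := by
    by_contra! hwa
    obtain rfl | hwa := hwa.eq_or_lt
    · exact (hS.1 _ heS).1 (Sym2.mk_isDiag_iff.2 rfl)
    rw [Sym2.eq_swap] at heS
    have := (isChord_natCast_iff hwa (by omega)).1 (hS.1 _ heS)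
    exact hS.not_interleaved heS habS hb ⟨by omega, by omega, by omega⟩
  obtain ⟨v, hv, hvw, hvfree⟩ := ih (w - (a + 1)) (by omega) haw hw heS rfl
  exact ⟨v, by omega, by omega, hvfree⟩

lemma NonCrossingChords.nested_of_common_inner {v : ℕ} (hS : NonCrossingChords n S)
    (hb : b < n) (hd : d < n) (habS : s((a : ZMod n), (b : ZMod n)) ∈ S)
    (hcdS : s((c : ZMod n), (d : ZMod n)) ∈ S) (hab : a < v ∧ v < b) (hcd : c < v ∧ v < d) :
    a ≤ c ∧ d ≤ b ∨ c ≤ a ∧ b ≤ d := by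
  have h₁ := hS.not_interleaved habS hcdS hd
  have h₂ := hS.not_interleaved hcdS habS hb
  omega

end Ears

section CycleWithChords

/-- The standard `n`-cycle together with the pairs in `S` as additional edges. For `2 ≤ n` the
outerplane graphs are exactly these graphs for `S` a set of non-crossing chords. -/
def cycleWithChords (n : ℕ) (S : Set (Sym2 (ZMod n))) : SimpleGraph (ZMod n) :=
  SimpleGraph.fromEdgeSet ({e | IsCycleEdge n e} ∪ S)

/-- The number of pairs in `S` that contain the vertex `v`. -/
noncomputable def chordDegree {n : ℕ} (S : Set (Sym2 (ZMod n))) (v : ZMod n) : ℕ :=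
  {e ∈ S | v ∈ e}.ncard

variable {n : ℕ} {S S' : Set (Sym2 (ZMod n))}

lemma IsCycleEdge.not_isDiag (hn : 2 ≤ n) {e : Sym2 (ZMod n)} (he : IsCycleEdge n e) :
    ¬ e.IsDiag := by
  have : Fact (1 < n) := ⟨hn⟩
  obtain ⟨i, rfl⟩ := he
  simp

lemma edgeSet_cycleWithChords (hn : 2 ≤ n) (hS : ∀ e ∈ S, IsChord n e) :
    (cycleWithChords n S).edgeSet = {e | IsCycleEdge n e} ∪ S := by
  rw [cycleWithChords, SimpleGraph.edgeSet_fromEdgeSet, sdiff_eq_left, Set.disjoint_left]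
  rintro e (he | he)
  exacts [he.not_isDiag hn, (hS e he).1]

lemma isOuterplane_iff (hn : 2 ≤ n) {G : SimpleGraph (ZMod n)} :
    IsOuterplane n G ↔ ∃ S, NonCrossingChords n S ∧ G = cycleWithChords n S := by
  refine exists_congr fun S => and_congr_right fun hS => ?_
  rw [← SimpleGraph.edgeSet_inj, edgeSet_cycleWithChords hn hS.1]

lemma chordDegree_eq_zero_iff [NeZero n] {v : ZMod n} :
    chordDegree S v = 0 ↔ ChordFree n S v := by
  rw [chordDegree, Set.ncard_eq_zero, Set.eq_empty_iff_forall_notMem]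
  simp only [ChordFree, Set.mem_ofPred_eq, not_and]

lemma ncard_cycleEdges_at (hn : 3 ≤ n) (v : ZMod n) :
    {e | IsCycleEdge n e ∧ v ∈ e}.ncard = 2 := by
  have hpair : {e | IsCycleEdge n e ∧ v ∈ e} = {s(v, v + 1), s(v - 1, v)} := by
    ext e
    simp only [Set.mem_ofPred_eq, Set.mem_insert_iff, Set.mem_singleton_iff]
    constructor
    · rintro ⟨⟨i, rfl⟩, hv⟩
      rcases Sym2.mem_iff.1 hv with rfl | rfl
      · exact Or.inl rfl
      · exact Or.inr (by rw [add_sub_cancel_right])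
    · rintro (rfl | rfl)
      · exact ⟨⟨v, rfl⟩, Sym2.mem_mk_left _ _⟩
      · exact ⟨⟨v - 1, by rw [sub_add_cancel]⟩, Sym2.mem_mk_right _ _⟩
  have hne : v + 1 ≠ v - 1 := by
    have h20 : ((2 : ℕ) : ZMod n) ≠ (0 : ℕ) := by
      rw [Ne, natCast_zmod_inj_of_lt (by omega) (by omega)]
      omega
    intro h
    exact h20 (by push_cast; linear_combination h)
  rw [hpair, Set.ncard_pair]
  rw [Ne, Sym2.eq_swap, Sym2.congr_left]
  exact hne

lemma degree_cycleWithChords (hn : 3 ≤ n) (hS : ∀ e ∈ S, IsChord n e) (v : ZMod n)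
    [Fintype ((cycleWithChords n S).neighborSet v)] :
    (cycleWithChords n S).degree v = 2 + chordDegree S v := by
  classical
  have : NeZero n := ⟨by omega⟩
  have hinc : (cycleWithChords n S).incidenceSet v =
      {e | IsCycleEdge n e ∧ v ∈ e} ∪ {e ∈ S | v ∈ e} := by
    rw [SimpleGraph.incidenceSet, edgeSet_cycleWithChords (by omega) hS]
    ext e
    exact or_and_right
  have hdisj : Disjoint {e | IsCycleEdge n e ∧ v ∈ e} {e ∈ S | v ∈ e} :=
    Set.disjoint_left.2 fun e he he' => (hS e he'.1).2 he.1
  rw [← SimpleGraph.card_incidenceSet_eq_degree, ← Nat.card_eq_fintype_card,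
    Nat.card_coe_set_eq, hinc, Set.ncard_union_eq hdisj, ncard_cycleEdges_at hn, chordDegree]

lemma degreeMultiset_eq_map_degree [NeZero n] (G : SimpleGraph (ZMod n)) [G.LocallyFinite] :
    degreeMultiset n G = Finset.univ.val.map fun v => G.degree v := by
  rw [degreeMultiset, dif_neg (NeZero.ne n), degMultiset]
  congr!

lemma degreeMultiset_congr [NeZero n] {G G' : SimpleGraph (ZMod n)} (f : G ≃g G') :
    degreeMultiset n G = degreeMultiset n G' := by
  classical
  calc degreeMultiset n G = Finset.univ.val.map fun v => G'.degree (f.toEquiv v) := by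
        rw [degreeMultiset_eq_map_degree]
        exact Multiset.map_congr rfl fun v _ => (f.degree_eq v).symm
    _ = (Finset.univ.val.map f.toEquiv).map fun v => G'.degree v := by
        rw [Multiset.map_map, Function.comp_def]
    _ = degreeMultiset n G' := by
        rw [Multiset.map_univ_val_equiv, degreeMultiset_eq_map_degree]

lemma degreeMultiset_cycleWithChords [NeZero n] (hn : 3 ≤ n) (hS : ∀ e ∈ S, IsChord n e) :
    degreeMultiset n (cycleWithChords n S) =
      Finset.univ.val.map fun v => 2 + chordDegree S v := by
  classical
  rw [degreeMultiset_eq_map_degree]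
  simp only [degree_cycleWithChords hn hS]

lemma sum_chordDegree [NeZero n] (hS : ∀ e ∈ S, ¬ e.IsDiag) :
    ∑ v, chordDegree S v = 2 * S.ncard := by
  classical
  have hdeg : ∀ v, chordDegree S v = (S.toFinset.filter (v ∈ ·)).card := fun v => by
    rw [chordDegree, ← Set.ncard_coe_finset]
    congr 1
    ext e
    simp
  have hends : ∀ e ∈ S.toFinset, (Finset.univ.filter (· ∈ e)).card = 2 := fun e he => by
    rw [← Sym2.card_toFinset_of_not_isDiag e (hS e (Set.mem_toFinset.1 he))]
    congr 1
    ext v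
    simp
  calc ∑ v, chordDegree S v = ∑ v, (S.toFinset.filter (v ∈ ·)).card := by simp only [hdeg]
    _ = ∑ e ∈ S.toFinset, (Finset.univ.filter (· ∈ e)).card :=
      Finset.sum_card_bipartiteAbove_eq_sum_card_bipartiteBelow _
    _ = 2 * S.ncard := by
      rw [Finset.sum_const_nat hends, Set.ncard_eq_toFinset_card', mul_comm]

lemma card_degreeMultiset [NeZero n] (G : SimpleGraph (ZMod n)) :
    (degreeMultiset n G).card = n := by
  classical
  rw [degreeMultiset_eq_map_degree, Multiset.card_map, Finset.card_val, Finset.card_univ,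
    ZMod.card]

lemma sum_degreeMultiset_cycleWithChords [NeZero n] (hn : 3 ≤ n) (hS : ∀ e ∈ S, IsChord n e) :
    (degreeMultiset n (cycleWithChords n S)).sum = 2 * n + 2 * S.ncard := by
  rw [degreeMultiset_cycleWithChords hn hS, ← sum_chordDegree fun e he => (hS e he).1,
    ← Finset.sum_eq_multiset_sum, Finset.sum_add_distrib, Finset.sum_const, Finset.card_univ,
    ZMod.card, smul_eq_mul, mul_comm]

lemma count_two_degreeMultiset_cycleWithChords [NeZero n] (hn : 3 ≤ n)
    (hS : ∀ e ∈ S, IsChord n e) :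
    (degreeMultiset n (cycleWithChords n S)).count 2 = {v | ChordFree n S v}.ncard := by
  classical
  rw [degreeMultiset_cycleWithChords hn hS, Multiset.count_map, ← Finset.filter_val,
    Finset.card_val, ← Set.ncard_coe_finset]
  congr 1
  ext v
  simp [← chordDegree_eq_zero_iff]

/-- A permutation of the vertices that preserves the standard cycle and carries `S` to `S'` is an
isomorphism between the corresponding graphs. -/
def cycleWithChordsIso (σ : Equiv.Perm (ZMod n))
    (hcycle : ∀ e, IsCycleEdge n (e.map σ) ↔ IsCycleEdge n e)
    (hchord : ∀ e, e.map σ ∈ S' ↔ e ∈ S) : cycleWithChords n S ≃g cycleWithChords n S' where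
  toEquiv := σ
  map_rel_iff' {u v} := by
    have hcycle := hcycle s(u, v)
    have hchord := hchord s(u, v)
    rw [Sym2.map_mk] at hcycle hchord
    simp only [cycleWithChords, SimpleGraph.fromEdgeSet_adj, Set.mem_union, Set.mem_ofPred_eq,
      hcycle, hchord, σ.injective.ne_iff]

end CycleWithChords

section BooleanPaths

/-- The number of steps of kind `b` among the first `t` steps of the path `p`. A sequence
`p : ℕ → Bool` is read as a lattice path whose steps go in the two directions `true` and
`false`. -/
def stepCount (p : ℕ → Bool) (b : Bool) (t : ℕ) : ℕ :=
  Nat.count (p · = b) t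

/-- The times up to `m` at which the path `p` has made exactly `w` steps of kind `b`. -/
def stepFiber (p : ℕ → Bool) (b : Bool) (m w : ℕ) : Finset ℕ :=
  {t ∈ Finset.range (m + 1) | stepCount p b t = w}

/-- Every nonempty fibre of the first `m` steps of `p` has `1` or `x` elements, for both kinds of
steps. -/
def HasFibersOneOr (x m : ℕ) (p : ℕ → Bool) : Prop :=
  ∀ b, ∀ t ≤ m, (stepFiber p b m (stepCount p b t)).card = 1 ∨
    (stepFiber p b m (stepCount p b t)).card = x

/-- The path made of alternating runs of length `y`, starting with a run of `true`. -/
def zigzag (y t : ℕ) : Bool :=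
  decide (t / y % 2 = 0)

variable {p q : ℕ → Bool} {b : Bool} {m t u w x y : ℕ}

lemma stepCount_zero : stepCount p b 0 = 0 :=
  Nat.count_zero _

lemma stepCount_succ_of_eq (h : p t = b) : stepCount p b (t + 1) = stepCount p b t + 1 := by
  rw [stepCount, Nat.count_succ, if_pos h, stepCount]

lemma stepCount_succ_of_ne (h : p t ≠ b) : stepCount p b (t + 1) = stepCount p b t := by
  rw [stepCount, Nat.count_succ, if_neg h, stepCount, add_zero]

lemma stepCount_mono : Monotone (stepCount p b) :=
  Nat.count_monotone _

lemma stepCount_lt_of_lt (htu : t < u) (h : p t = b) : stepCount p b t < stepCount p b u :=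
  Nat.count_strict_mono h htu

lemma stepCount_congr (h : ∀ u < t, p u = q u) : stepCount p b t = stepCount q b t := by
  rw [stepCount, stepCount, Nat.count_eq_card_filter_range, Nat.count_eq_card_filter_range]
  refine congrArg _ (Finset.filter_congr fun u hu => ?_)
  rw [h u (Finset.mem_range.1 hu)]

lemma stepCount_not : stepCount (fun u => !p u) b t = stepCount p (!b) t := by
  simp only [stepCount, Bool.not_eq_eq_eq_not]

lemma stepCount_true_add_stepCount_false (t : ℕ) :
    stepCount p true t + stepCount p false t = t := by
  induction t with
  | zero => rw [stepCount_zero, stepCount_zero]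
  | succ t ih => cases h : p t <;> simp [stepCount_succ_of_eq, stepCount_succ_of_ne, h] <;> omega

lemma exists_stepCount_eq (hw : w ≤ stepCount p b m) : ∃ t ≤ m, stepCount p b t = w := by
  induction m with
  | zero => exact ⟨0, le_rfl, by rw [stepCount_zero] at hw ⊢; omega⟩
  | succ m ih =>
    obtain hle | hlt := le_or_gt w (stepCount p b m)
    · obtain ⟨t, htm, ht⟩ := ih hle
      exact ⟨t, by omega, ht⟩
    · refine ⟨m + 1, le_rfl, ?_⟩
      by_cases h : p m = b
      · rw [stepCount_succ_of_eq h] at hw ⊢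
        omega
      · rw [stepCount_succ_of_ne h] at hw
        omega

lemma mem_stepFiber : t ∈ stepFiber p b m w ↔ t ≤ m ∧ stepCount p b t = w := by
  rw [stepFiber, Finset.mem_filter, Finset.mem_range, Nat.lt_succ_iff]

lemma stepFiber_ssubset_of_diverge (htm : t + 1 < m) (hpq : ∀ u < t + 1, p u = q u)
    (hp : p (t + 1) = b) (hq : q (t + 1) ≠ b) :
    stepFiber p b m (stepCount p b (t + 1)) ⊂ stepFiber q b m (stepCount q b (t + 1)) := by
  have hcount : ∀ u ≤ t + 1, stepCount p b u = stepCount q b u := fun u hu =>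
    stepCount_congr fun v hv => hpq v (by omega)
  refine (Finset.ssubset_iff_of_subset fun u hu => ?_).2 ⟨t + 2, ?_, ?_⟩
  · obtain ⟨hum, hu⟩ := mem_stepFiber.1 hu
    have hut : u ≤ t + 1 := by
      by_contra! h
      exact (stepCount_lt_of_lt h hp).ne' hu
    exact mem_stepFiber.2 ⟨hum, by rw [← hcount u hut, hu, hcount _ le_rfl]⟩
  · exact mem_stepFiber.2 ⟨htm, stepCount_succ_of_ne hq⟩
  · exact fun h => (stepCount_lt_of_lt (Nat.lt_succ_self _) hp).ne' (mem_stepFiber.1 h).2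

-- The two fibres have different sizes, and the smaller one already contains `t` and `t + 1`.
lemma HasFibersOneOr.not_diverge (hp : HasFibersOneOr x m p) (hq : HasFibersOneOr x m q)
    (htm : t + 1 < m) (hpq : ∀ u < t + 1, p u = q u) (ht : p t ≠ b) (hpt : p (t + 1) = b) :
    q (t + 1) = b := by
  by_contra hqt
  have hlt := Finset.card_lt_card (stepFiber_ssubset_of_diverge htm hpq hpt hqt)
  have htwo : 1 < (stepFiber p b m (stepCount p b (t + 1))).card :=
    Finset.one_lt_card.2 ⟨t, mem_stepFiber.2 ⟨by omega, (stepCount_succ_of_ne ht).symm⟩,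
      t + 1, mem_stepFiber.2 ⟨by omega, rfl⟩, by omega⟩
  have := hp b (t + 1) (by omega)
  have := hq b (t + 1) (by omega)
  omega

theorem HasFibersOneOr.eq_of_lt (hp : HasFibersOneOr x m p) (hq : HasFibersOneOr x m q)
    (hzero : p 0 = q 0) : ∀ t < m, p t = q t := by
  intro t
  induction t using Nat.strong_induction_on with
  | _ t ih =>
    intro htm
    obtain _ | t := t
    · exact hzero
    have hpq : ∀ u < t + 1, p u = q u := fun u hu => ih u hu (by omega)
    have hpt := hp.not_diverge hq (b := !p t) htm hpq (by simp)
    have hqt := hq.not_diverge hp (b := !p t) htm (fun u hu => (hpq u hu).symm)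
      (by simp [hpq t t.lt_succ_self])
    revert hpt hqt
    cases p t <;> cases p (t + 1) <;> cases q (t + 1) <;> simp

lemma exists_first_stepCount_eq (p : ℕ → Bool) (b : Bool) (t : ℕ) :
    ∃ s ≤ t, stepCount p b s = stepCount p b t ∧ ∀ u, u + 1 = s → p u = b := by
  induction t with
  | zero => exact ⟨0, le_rfl, rfl, by omega⟩
  | succ t ih =>
    by_cases h : p t = b
    · refine ⟨t + 1, le_rfl, rfl, fun u hu => ?_⟩
      rwa [Nat.succ_injective hu]
    · obtain ⟨s, hst, hs⟩ := ih
      exact ⟨s, by omega, by rwa [stepCount_succ_of_ne h]⟩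

lemma stepFiber_eq_Icc {s e : ℕ} (hse : s ≤ e) (hem : e ≤ m) (hs : ∀ u, u + 1 = s → p u = b)
    (hconst : ∀ u, s ≤ u → u < e → p u ≠ b) (he : e = m ∨ p e = b) :
    stepFiber p b m (stepCount p b s) = Finset.Icc s e := by
  have hflat : ∀ u, s ≤ u → u ≤ e → stepCount p b u = stepCount p b s := by
    intro u hsu
    induction u, hsu using Nat.le_induction with
    | base => exact fun _ => rfl
    | succ u hsu ih =>
      intro hue
      rw [stepCount_succ_of_ne (hconst u hsu hue), ih (by omega)]
  ext u
  rw [mem_stepFiber, Finset.mem_Icc]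
  refine ⟨fun ⟨hum, hu⟩ => ⟨?_, ?_⟩, fun ⟨hsu, hue⟩ => ⟨by omega, hflat u hsu hue⟩⟩
  · by_contra! hus
    obtain ⟨v, rfl⟩ := Nat.exists_eq_succ_of_ne_zero (Nat.ne_zero_of_lt hus)
    have := stepCount_lt_of_lt v.lt_succ_self (hs v rfl)
    have := stepCount_mono (p := p) (b := b) (Nat.le_of_lt_succ hus)
    omega
  · obtain rfl | he := he
    · exact hum
    · by_contra! heu
      have := stepCount_lt_of_lt heu he
      have := hflat e hse le_rfl
      omega

lemma zigzag_zero (y : ℕ) : zigzag y 0 = true := by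
  simp [zigzag]

lemma zigzag_add_self (hy : 0 < y) (t : ℕ) : zigzag y (t + y) = !zigzag y t := by
  simp only [zigzag, Nat.add_div_right t hy, ← decide_not, decide_eq_decide]
  omega

lemma zigzag_mul_add (hy : 0 < y) {j r : ℕ} (hr : r < y) :
    zigzag y (y * j + r) = zigzag y (y * j) := by
  rw [zigzag, zigzag, Nat.mul_add_div hy, Nat.div_eq_of_lt hr, Nat.mul_div_cancel_left _ hy,
    add_zero]

lemma dvd_succ_of_zigzag_ne (hne : zigzag y t ≠ zigzag y (t + 1)) : y ∣ t + 1 := by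
  by_contra hndvd
  rw [zigzag, zigzag, Nat.succ_div_of_not_dvd hndvd] at hne
  exact hne rfl

theorem hasFibersOneOr_zigzag (hy : 0 < y) (hdvd : y ∣ m) :
    HasFibersOneOr (y + 1) m (zigzag y) := by
  intro b t htm
  obtain ⟨s, hst, hcount, hs⟩ := exists_first_stepCount_eq (zigzag y) b t
  rw [← hcount]
  by_cases hshort : s = m ∨ zigzag y s = b
  · left
    rw [stepFiber_eq_Icc le_rfl (by omega) hs (by omega) hshort, Nat.card_Icc]
    omega
  right
  obtain ⟨hsm, hsb⟩ := not_or.1 hshort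
  have hys : y ∣ s := by
    obtain _ | u := s
    · exact dvd_zero y
    · exact dvd_succ_of_zigzag_ne (by rw [hs u rfl]; exact Ne.symm hsb)
  have hsy : s + y ≤ m := by
    have := Nat.le_of_dvd (by omega) (Nat.dvd_sub hdvd hys)
    omega
  obtain ⟨j, rfl⟩ := hys
  have hrun : ∀ u, y * j ≤ u → u < y * j + y → zigzag y u ≠ b := by
    intro u hju huj
    obtain ⟨r, rfl⟩ := Nat.exists_eq_add_of_le hju
    rwa [zigzag_mul_add hy (by omega)]
  have hend : zigzag y (y * j + y) = b := by
    rw [zigzag_add_self hy]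
    exact (Bool.eq_not.2 (Ne.symm hsb)).symm
  rw [stepFiber_eq_Icc (by omega) hsy hs hrun (Or.inr hend), Nat.card_Icc]
  omega

end BooleanPaths

section NestedIntervals

variable {m : ℕ} {I : Finset (ℕ × ℕ)}

lemma exists_mem_length_eq_of_nested (hI : ∀ i ∈ I, i.1 + 2 ≤ i.2 ∧ i.2 ≤ m + 2)
    (hnested : ∀ i ∈ I, ∀ j ∈ I, i.1 ≤ j.1 ∧ j.2 ≤ i.2 ∨ j.1 ≤ i.1 ∧ i.2 ≤ j.2)
    (hcard : I.card = m + 1) {t : ℕ} (ht : t ≤ m) : ∃ i ∈ I, i.2 + t = i.1 + (m + 2) := by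
  have hmaps : Set.MapsTo (fun i : ℕ × ℕ => i.2 - i.1 - 2) I (Finset.range (m + 1)) := by
    intro i hi
    have := hI i hi
    simp only [Finset.coe_range, Set.mem_Iio]
    omega
  have hinj : Set.InjOn (fun i : ℕ × ℕ => i.2 - i.1 - 2) I := by
    intro i hi j hj hij
    have := hI i hi
    have := hI j hj
    have := hnested i hi j hj
    simp only at hij
    ext <;> omega
  have hmem : m - t ∈ Finset.range (m + 1) := Finset.mem_range.2 (by omega)
  obtain ⟨i, hi, hlen⟩ := Finset.surjOn_of_injOn_of_card_le _ hmaps hinj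
    (by rw [Finset.card_range, hcard]) hmem
  have := hI i hi
  simp only at hlen
  exact ⟨i, hi, by omega⟩

lemma exists_path_of_unit_steps {f : ℕ → ℕ} (hzero : f 0 = 0)
    (hstep : ∀ t < m, f (t + 1) = f t ∨ f (t + 1) = f t + 1) :
    ∃ p : ℕ → Bool, ∀ t ≤ m, stepCount p true t = f t := by
  refine ⟨fun t => decide (f (t + 1) = f t + 1), fun t => ?_⟩
  induction t with
  | zero => exact fun _ => by rw [stepCount_zero, hzero]
  | succ t ih =>
    intro htm
    obtain h | h := hstep t htm
    · rw [stepCount_succ_of_ne (by simp [h]), ih (by omega), h]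
    · rw [stepCount_succ_of_eq (by simp [h]), ih (by omega), h]

-- There is exactly one interval of each length, so each one extends the next by one unit on one
-- side; these sides are the steps of the path.
theorem exists_path_of_nested (hI : ∀ i ∈ I, i.1 + 2 ≤ i.2 ∧ i.2 ≤ m + 2)
    (hnested : ∀ i ∈ I, ∀ j ∈ I, i.1 ≤ j.1 ∧ j.2 ≤ i.2 ∨ j.1 ≤ i.1 ∧ i.2 ≤ j.2)
    (hcard : I.card = m + 1) :
    ∃ p : ℕ → Bool, ∀ i ∈ I,
      ∃ t ≤ m, i.1 = stepCount p true t ∧ i.2 + stepCount p false t = m + 2 := by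
  have hex : ∀ t, ∃ i, t ≤ m → i ∈ I ∧ i.2 + t = i.1 + (m + 2) := fun t => by
    by_cases ht : t ≤ m
    · obtain ⟨i, hi⟩ := exists_mem_length_eq_of_nested hI hnested hcard ht
      exact ⟨i, fun _ => hi⟩
    · exact ⟨0, fun h => absurd h ht⟩
  choose f hf using hex
  obtain ⟨p, hp⟩ : ∃ p : ℕ → Bool, ∀ t ≤ m, stepCount p true t = (f t).1 := by
    refine exists_path_of_unit_steps ?_ fun t ht => ?_
    · obtain ⟨hmem, hlen⟩ := hf 0 m.zero_le
      have := hI _ hmem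
      omega
    · obtain ⟨hmem, hlen⟩ := hf t (by omega)
      obtain ⟨hmem', hlen'⟩ := hf (t + 1) ht
      have := hnested _ hmem _ hmem'
      omega
  refine ⟨p, fun i hi => ?_⟩
  obtain ⟨t, htm, hit⟩ : ∃ t ≤ m, i.2 + t = i.1 + (m + 2) := by
    have := hI i hi
    exact ⟨i.1 + (m + 2) - i.2, by omega, by omega⟩
  obtain ⟨hmem, hlen⟩ := hf t htm
  have := hnested i hi _ hmem
  have := hp t htm
  have := stepCount_true_add_stepCount_false (p := p) t
  exact ⟨t, htm, by omega, by omega⟩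

end NestedIntervals

section DegreeMultiset

variable {k x : ℕ} {s : Multiset ℕ}

lemma eq_replicate_add_replicate_add_replicate {a b c : ℕ} (hab : a ≠ b) (hac : a ≠ c)
    (hbc : b ≠ c) (hs : ∀ d ∈ s, d = a ∨ d = b ∨ d = c) :
    s = Multiset.replicate (s.count a) a + Multiset.replicate (s.count b) b +
      Multiset.replicate (s.count c) c := by
  ext d
  simp only [Multiset.count_add, Multiset.count_replicate]
  by_cases hd : d ∈ s
  · rcases hs d hd with rfl | rfl | rfl <;> simp [hab, hac, hbc, hab.symm, hac.symm, hbc.symm]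
  · rw [Multiset.count_eq_zero_of_notMem hd]
    split_ifs <;> subst_vars <;> simp [hd]

theorem eq_replicate_three_degrees_iff (hx : 2 ≤ x) (hcard : s.card = k * (x - 1) + 4) :
    s = Multiset.replicate k (x + 2) + Multiset.replicate (k * (x - 2) + 2) 3 +
        Multiset.replicate 2 2 ↔
      (∀ d ∈ s, d = x + 2 ∨ d = 3 ∨ d = 2) ∧ s.count 2 = 2 ∧ s.sum + 6 = 4 * s.card := by
  obtain ⟨y, rfl⟩ := Nat.exists_eq_add_of_le' hx
  rw [show y + 2 - 1 = y + 1 by omega] at hcard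
  rw [show y + 2 - 2 = y by omega]
  constructor
  · intro hs
    refine ⟨fun d hd => ?_, ?_, ?_⟩
    · simp only [hs, Multiset.mem_add, Multiset.mem_replicate] at hd
      omega
    · simp [hs, Multiset.count_replicate]
    · rw [hcard, hs]
      simp only [Multiset.sum_add, Multiset.sum_replicate, smul_eq_mul]
      ring
  · rintro ⟨hmem, htwo, hsum⟩
    have hs := eq_replicate_add_replicate_add_replicate (by omega) (by omega) (by omega) hmem
    set j := s.count (y + 2 + 2)
    set l := s.count 3
    rw [htwo] at hs
    have hcard' := congrArg Multiset.card hs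
    have hsum' := congrArg Multiset.sum hs
    simp only [Multiset.card_add, Multiset.card_replicate, Multiset.sum_add,
      Multiset.sum_replicate, smul_eq_mul] at hcard' hsum'
    have hjk : j = k := Nat.eq_of_mul_eq_mul_right y.succ_pos (by linarith)
    have hl : l = k * y + 2 := by
      subst hjk
      linarith
    rw [hs, hjk, hl]

end DegreeMultiset

section Symmetries

variable {n : ℕ} {S : Set (Sym2 (ZMod n))}

lemma isCycleEdge_map_addRight (c : ZMod n) (e : Sym2 (ZMod n)) :
    IsCycleEdge n (e.map (Equiv.addRight c)) ↔ IsCycleEdge n e := by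
  induction e using Sym2.ind with
  | _ u v =>
  simp only [IsCycleEdge, Sym2.map_mk, Equiv.coe_addRight, Sym2.eq_iff]
  constructor
  · rintro ⟨i, hi⟩
    exact ⟨i - c, by grind⟩
  · rintro ⟨i, hi⟩
    exact ⟨i + c, by grind⟩

lemma isCycleEdge_map_subLeft (c : ZMod n) (e : Sym2 (ZMod n)) :
    IsCycleEdge n (e.map (Equiv.subLeft c)) ↔ IsCycleEdge n e := by
  induction e using Sym2.ind with
  | _ u v =>
  simp only [IsCycleEdge, Sym2.map_mk, Equiv.subLeft_apply, Sym2.eq_iff]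
  constructor <;> rintro ⟨i, hi⟩ <;> refine ⟨c - (i + 1), ?_⟩ <;> grind

lemma isChord_map_addRight (c : ZMod n) (e : Sym2 (ZMod n)) :
    IsChord n (e.map (Equiv.addRight c)) ↔ IsChord n e := by
  rw [IsChord, IsChord, isCycleEdge_map_addRight, Sym2.isDiag_map (Equiv.injective _)]

lemma cross_map_addRight (c : ZMod n) (e f : Sym2 (ZMod n)) :
    Cross n (e.map (Equiv.addRight c)) (f.map (Equiv.addRight c)) ↔ Cross n e f := by
  induction e, f using Sym2.inductionOn₂ with
  | _ u v w z =>
  simp only [Sym2.map_mk, Equiv.coe_addRight, cross_mk_iff_s4, Between, add_sub_add_right_eq_sub]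

lemma NonCrossingChords.preimage_addRight (hS : NonCrossingChords n S) (c : ZMod n) :
    NonCrossingChords n (Sym2.map (Equiv.addRight c) ⁻¹' S) := by
  refine ⟨fun e he => (isChord_map_addRight c e).1 (hS.1 _ he), fun e he f hf hef => ?_⟩
  rw [← cross_map_addRight c]
  exact hS.2 _ he _ hf ((Sym2.map.injective (Equiv.injective _)).ne hef)

lemma ncard_preimage_map_equiv (σ : Equiv.Perm (ZMod n)) :
    (Sym2.map σ ⁻¹' S).ncard = S.ncard :=
  Set.ncard_preimage_of_injective_subset_range (Sym2.map.injective σ.injective) fun e _ =>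
    ⟨e.map σ.symm, by simp [Sym2.map_map]⟩

lemma chordFree_preimage_map_equiv_iff (σ : Equiv.Perm (ZMod n)) {v : ZMod n} :
    ChordFree n (Sym2.map σ ⁻¹' S) v ↔ ChordFree n S (σ v) := by
  constructor
  · intro h e he hv
    refine h (e.map σ.symm) (by simpa [Sym2.map_map] using he) ?_
    exact Sym2.mem_map.2 ⟨σ v, hv, σ.symm_apply_apply v⟩
  · exact fun h e he hv => h _ he (Sym2.mem_map.2 ⟨v, hv, rfl⟩)

lemma ncard_chordFree_preimage_map_equiv (σ : Equiv.Perm (ZMod n)) :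
    {v | ChordFree n (Sym2.map σ ⁻¹' S) v}.ncard = {v | ChordFree n S v}.ncard := by
  simp only [chordFree_preimage_map_equiv_iff]
  exact Set.ncard_preimage_of_injective_subset_range (s := {v | ChordFree n S v}) σ.injective
    fun v _ => σ.surjective v

end Symmetries

section Snakes

variable {m t u : ℕ} {p q : ℕ → Bool} {b b' : Bool}

/-- The endpoints of the successive chords of a snake triangulation: the `true` endpoint starts at
the vertex `0` and moves up with every `true` step of `p`, the `false` endpoint starts at `-2` and
moves down with every `false` step. -/
def snakeEnd (m : ℕ) (p : ℕ → Bool) : Bool → ℕ → ZMod (m + 4)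
  | true, t => stepCount p true t
  | false, t => -2 - stepCount p false t

/-- The chord of a snake triangulation after `t` steps of the path `p`. -/
def snakeChord (m : ℕ) (p : ℕ → Bool) (t : ℕ) : Sym2 (ZMod (m + 4)) :=
  s(snakeEnd m p true t, snakeEnd m p false t)

/-- The `m + 1` chords of the snake triangulation with path `p`, of which only the first `m` steps
matter. -/
def snakeChords (m : ℕ) (p : ℕ → Bool) : Set (Sym2 (ZMod (m + 4))) :=
  snakeChord m p '' Set.Iic m

/-- The triangulation of the `(m + 4)`-gon whose chords are obtained from one another by advancing
one endpoint at a time, as prescribed by the path `p`. -/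
def snakeGraph (m : ℕ) (p : ℕ → Bool) : SimpleGraph (ZMod (m + 4)) :=
  cycleWithChords (m + 4) (snakeChords m p)

lemma snakeEnd_true : snakeEnd m p true t = (stepCount p true t : ZMod (m + 4)) :=
  rfl

lemma snakeEnd_false_eq_natCast (ht : t ≤ m) :
    snakeEnd m p false t = ((m + 2 - stepCount p false t : ℕ) : ZMod (m + 4)) := by
  have hsum := stepCount_true_add_stepCount_false (p := p) t
  have hzero := ZMod.natCast_self (m + 4)
  push_cast at hzero
  rw [snakeEnd, Nat.cast_sub (by omega)]
  push_cast
  linear_combination -hzero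

lemma snakeChord_eq_natCast (ht : t ≤ m) :
    snakeChord m p t = s(((stepCount p true t : ℕ) : ZMod (m + 4)),
      ((m + 2 - stepCount p false t : ℕ) : ZMod (m + 4))) := by
  rw [snakeChord, snakeEnd_false_eq_natCast ht, snakeEnd_true]

lemma mk_natCast_mem_snakeChords_iff {a c : ℕ} (hac : a < c) (hc : c < m + 4) :
    s((a : ZMod (m + 4)), (c : ZMod (m + 4))) ∈ snakeChords m p ↔
      ∃ t ≤ m, a = stepCount p true t ∧ c + stepCount p false t = m + 2 := by
  refine exists_congr fun t => and_congr_right fun ht => ?_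
  have hsum := stepCount_true_add_stepCount_false (p := p) t
  have ht : t ≤ m := ht
  rw [snakeChord_eq_natCast ht, mk_natCast_inj (by omega) (by omega) hac hc]
  omega

lemma snakeEnd_eq_snakeEnd_iff (ht : t ≤ m) (hu : u ≤ m) :
    snakeEnd m p b t = snakeEnd m p b' u ↔ b = b' ∧ stepCount p b t = stepCount p b u := by
  have hm := stepCount_true_add_stepCount_false (p := p) m
  have := stepCount_mono (p := p) (b := true) ht
  have := stepCount_mono (p := p) (b := false) ht
  have := stepCount_mono (p := p) (b := true) hu
  have := stepCount_mono (p := p) (b := false) hu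
  cases b <;> cases b' <;>
    simp only [snakeEnd_false_eq_natCast, ht, hu, snakeEnd_true] <;>
    rw [natCast_zmod_inj_of_lt (by omega) (by omega)] <;> simp <;> omega

lemma snakeEnd_mem_snakeChord_iff (ht : t ≤ m) (hu : u ≤ m) :
    snakeEnd m p b t ∈ snakeChord m p u ↔ stepCount p b u = stepCount p b t := by
  rw [snakeChord, Sym2.mem_iff, snakeEnd_eq_snakeEnd_iff ht hu, snakeEnd_eq_snakeEnd_iff ht hu]
  cases b <;> simp [eq_comm]

lemma injOn_snakeChord : Set.InjOn (snakeChord m p) (Set.Iic m) := by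
  intro t ht u hu htu
  have hmem (b : Bool) : stepCount p b u = stepCount p b t := by
    rw [← snakeEnd_mem_snakeChord_iff ht hu, ← htu, snakeEnd_mem_snakeChord_iff ht ht]
  rw [← stepCount_true_add_stepCount_false (p := p) t, ← hmem, ← hmem,
    stepCount_true_add_stepCount_false]

lemma ncard_snakeChords : (snakeChords m p).ncard = m + 1 := by
  rw [snakeChords, injOn_snakeChord.ncard_image, Set.ncard_eq_toFinset_card', Set.toFinset_Iic,
    Nat.card_Iic]

lemma nonCrossingChords_snakeChords : NonCrossingChords (m + 4) (snakeChords m p) := by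
  have hsum := stepCount_true_add_stepCount_false (p := p)
  constructor
  · rintro _ ⟨t, ht : t ≤ m, rfl⟩
    have := hsum t
    rw [snakeChord_eq_natCast ht, isChord_natCast_iff (by omega) (by omega)]
    omega
  · rintro _ ⟨t, ht : t ≤ m, rfl⟩ _ ⟨u, hu : u ≤ m, rfl⟩ -
    have := hsum t
    have := hsum u
    rw [snakeChord_eq_natCast ht, snakeChord_eq_natCast hu,
      cross_natCast_iff (by omega) (by omega) (by omega) (by omega)]
    obtain h | h := le_total t u <;>
    · have := stepCount_mono (p := p) (b := true) h
      have := stepCount_mono (p := p) (b := false) h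
      omega

lemma chordDegree_snakeEnd (ht : t ≤ m) :
    chordDegree (snakeChords m p) (snakeEnd m p b t) =
      (stepFiber p b m (stepCount p b t)).card := by
  have himage : {e ∈ snakeChords m p | snakeEnd m p b t ∈ e} =
      snakeChord m p '' stepFiber p b m (stepCount p b t) := by
    ext e
    constructor
    · rintro ⟨⟨u, hu, rfl⟩, hmem⟩
      exact ⟨u, mem_stepFiber.2 ⟨hu, (snakeEnd_mem_snakeChord_iff ht hu).1 hmem⟩, rfl⟩
    · rintro ⟨u, hmem, rfl⟩
      obtain ⟨hu, hcount⟩ := mem_stepFiber.1 hmem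
      exact ⟨⟨u, hu, rfl⟩, (snakeEnd_mem_snakeChord_iff ht hu).2 hcount⟩
  rw [chordDegree, himage, Set.InjOn.ncard_image, Set.ncard_coe_finset]
  exact injOn_snakeChord.mono fun u hu => (mem_stepFiber.1 hu).1

lemma chordFree_snakeChords_iff {v : ZMod (m + 4)} :
    ChordFree (m + 4) (snakeChords m p) v ↔ ∀ b, ∀ t ≤ m, v ≠ snakeEnd m p b t := by
  simp only [ChordFree, snakeChords, Set.forall_mem_image, Set.mem_Iic, snakeChord, Sym2.mem_iff,
    Bool.forall_bool]
  grind

lemma ncard_chordFree_snakeChords : {v | ChordFree (m + 4) (snakeChords m p) v}.ncard = 2 := by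
  have hm := stepCount_true_add_stepCount_false (p := p) m
  have hpair : {v | ChordFree (m + 4) (snakeChords m p) v} =
      {((stepCount p true m + 1 : ℕ) : ZMod (m + 4)), ((m + 3 : ℕ) : ZMod (m + 4))} := by
    ext v
    obtain ⟨w, hw, rfl⟩ : ∃ w : ℕ, w < m + 4 ∧ (w : ZMod (m + 4)) = v :=
      ⟨v.val, v.val_lt, ZMod.natCast_zmod_val v⟩
    simp only [Set.mem_ofPred_eq, chordFree_snakeChords_iff, Bool.forall_bool,
      Set.mem_insert_iff, Set.mem_singleton_iff]
    rw [natCast_zmod_inj_of_lt hw (by omega), natCast_zmod_inj_of_lt hw (by omega)]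
    constructor
    · rintro ⟨hfalse, htrue⟩
      by_contra! hw'
      obtain hle | hlt := le_or_gt w (stepCount p true m)
      · obtain ⟨t, ht, rfl⟩ := exists_stepCount_eq hle
        exact htrue t ht rfl
      · obtain ⟨t, ht, hcount⟩ := exists_stepCount_eq (w := m + 2 - w) (m := m) (p := p)
          (b := false) (by omega)
        refine hfalse t ht ?_
        rw [snakeEnd_false_eq_natCast ht, hcount, Nat.sub_sub_self (by omega)]
    · refine fun hw' => ⟨fun t ht => ?_, fun t ht => ?_⟩
      · have := stepCount_mono (p := p) (b := false) ht
        rw [snakeEnd_false_eq_natCast ht, Ne, natCast_zmod_inj_of_lt hw (by omega)]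
        omega
      · have := stepCount_mono (p := p) (b := true) ht
        rw [snakeEnd_true, Ne, natCast_zmod_inj_of_lt hw (by omega)]
        omega
  rw [hpair, Set.ncard_pair]
  rw [Ne, natCast_zmod_inj_of_lt (by omega) (by omega)]
  omega

lemma snakeGraph_congr (hpq : ∀ t < m, p t = q t) : snakeGraph m p = snakeGraph m q := by
  have hcount (b : Bool) (t : ℕ) (ht : t ≤ m) : stepCount p b t = stepCount q b t :=
    stepCount_congr fun u hu => hpq u (hu.trans_le ht)
  rw [snakeGraph, snakeGraph, snakeChords, snakeChords]
  congr 1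
  refine Set.image_congr fun t ht => ?_
  simp only [snakeChord, snakeEnd, hcount _ t ht]

/-- Reflecting the polygon in the axis that swaps `0` and `-2` exchanges the two kinds of steps. -/
def snakeGraphNotIso (m : ℕ) (p : ℕ → Bool) :
    snakeGraph m p ≃g snakeGraph m fun t => !p t :=
  cycleWithChordsIso (Equiv.subLeft (-2)) (isCycleEdge_map_subLeft _) fun e => by
    have hreflect : ∀ t, snakeChord m (fun t => !p t) t =
        (snakeChord m p t).map (Equiv.subLeft (-2)) := fun t => by
      simp [snakeChord, snakeEnd, stepCount_not, Sym2.eq_swap]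
    simp only [snakeChords, Set.mem_image, hreflect,
      (Sym2.map.injective (Equiv.subLeft (-2 : ZMod (m + 4))).injective).eq_iff]

lemma count_two_degreeMultiset_snakeGraph :
    (degreeMultiset (m + 4) (snakeGraph m p)).count 2 = 2 := by
  rw [snakeGraph, count_two_degreeMultiset_cycleWithChords (by omega)
    nonCrossingChords_snakeChords.1, ncard_chordFree_snakeChords]

lemma sum_degreeMultiset_snakeGraph :
    (degreeMultiset (m + 4) (snakeGraph m p)).sum + 6 = 4 * (m + 4) := by
  rw [snakeGraph, sum_degreeMultiset_cycleWithChords (by omega) nonCrossingChords_snakeChords.1,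
    ncard_snakeChords]
  omega

lemma forall_mem_degreeMultiset_snakeGraph_iff {x : ℕ} :
    (∀ d ∈ degreeMultiset (m + 4) (snakeGraph m p), d = x + 2 ∨ d = 3 ∨ d = 2) ↔
      HasFibersOneOr x m p := by
  rw [snakeGraph, degreeMultiset_cycleWithChords (by omega) nonCrossingChords_snakeChords.1]
  simp only [Multiset.mem_map, Finset.mem_val, Finset.mem_univ, true_and, forall_exists_index,
    forall_apply_eq_imp_iff]
  constructor
  · intro h b t ht
    have hpos : 0 < (stepFiber p b m (stepCount p b t)).card :=
      Finset.card_pos.2 ⟨t, mem_stepFiber.2 ⟨ht, rfl⟩⟩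
    have := h (snakeEnd m p b t)
    rw [chordDegree_snakeEnd ht] at this
    omega
  · intro h v
    by_cases hv : ChordFree (m + 4) (snakeChords m p) v
    · rw [chordDegree_eq_zero_iff.2 hv]
      omega
    · rw [chordFree_snakeChords_iff] at hv
      push Not at hv
      obtain ⟨b, t, ht, rfl⟩ := hv
      have := h b t ht
      rw [chordDegree_snakeEnd ht]
      omega

end Snakes

section StructureTheorem

lemma exists_finset_natCast_pairs {n : ℕ} [NeZero n] {S : Set (Sym2 (ZMod n))}
    (hS : ∀ e ∈ S, ¬ e.IsDiag) :
    ∃ I : Finset (ℕ × ℕ), I.card = S.ncard ∧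
      ∀ i, i ∈ I ↔ i.1 < i.2 ∧ i.2 < n ∧ s((i.1 : ZMod n), (i.2 : ZMod n)) ∈ S := by
  classical
  let I : Finset (ℕ × ℕ) := {i ∈ Finset.range n ×ˢ Finset.range n |
    i.1 < i.2 ∧ s((i.1 : ZMod n), (i.2 : ZMod n)) ∈ S}
  have hI : ∀ i, i ∈ I ↔ i.1 < i.2 ∧ i.2 < n ∧ s((i.1 : ZMod n), (i.2 : ZMod n)) ∈ S := by
    intro i
    simp only [I, Finset.mem_filter, Finset.mem_product, Finset.mem_range]
    exact ⟨fun h => ⟨h.2.1, h.1.2, h.2.2⟩, fun h => ⟨⟨h.1.trans h.2.1, h.2.1⟩, h.1, h.2.2⟩⟩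
  have himage : (fun i : ℕ × ℕ => s((i.1 : ZMod n), (i.2 : ZMod n))) '' I = S := by
    ext e
    constructor
    · rintro ⟨i, hi, rfl⟩
      exact ((hI i).1 hi).2.2
    · intro he
      obtain ⟨a, b, hab, hb, rfl⟩ := exists_natCast_lt_of_not_isDiag (hS e he)
      exact ⟨(a, b), (hI _).2 ⟨hab, hb, he⟩, rfl⟩
  have hinj : Set.InjOn (fun i : ℕ × ℕ => s((i.1 : ZMod n), (i.2 : ZMod n))) I := by
    intro i hi j hj hij
    obtain ⟨hi, hin, -⟩ := (hI i).1 hi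
    obtain ⟨hj, hjn, -⟩ := (hI j).1 hj
    exact Prod.ext_iff.2 ((mk_natCast_inj hi hin hj hjn).1 hij)
  exact ⟨I, by rw [← himage, hinj.ncard_image, Set.ncard_coe_finset], hI⟩

variable {m : ℕ} {S : Set (Sym2 (ZMod (m + 4)))}

lemma NonCrossingChords.exists_common_inner (hS : NonCrossingChords (m + 4) S)
    (hfree : {v | ChordFree (m + 4) S v}.ncard = 2)
    (hlast : ChordFree (m + 4) S ((m + 3 : ℕ) : ZMod (m + 4))) :
    ∃ v : ℕ, ∀ a b : ℕ, a < b → b < m + 4 →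
      s((a : ZMod (m + 4)), (b : ZMod (m + 4))) ∈ S → a < v ∧ v < b := by
  obtain ⟨v, hv⟩ : ∃ v : ZMod (m + 4), ∀ w, ChordFree (m + 4) S w →
      w = ((m + 3 : ℕ) : ZMod (m + 4)) ∨ w = v := by
    obtain ⟨y, z, -, hyz⟩ := Set.ncard_eq_two.1 hfree
    have hmem : ∀ w, ChordFree (m + 4) S w ↔ w = y ∨ w = z := fun w => by
      simpa using Set.ext_iff.1 hyz w
    obtain rfl | rfl := (hmem _).1 hlast
    exacts [⟨z, fun w => (hmem w).1⟩, ⟨y, fun w hw => ((hmem w).1 hw).symm⟩]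
  refine ⟨v.val, fun a b hab hb habS => ?_⟩
  obtain ⟨w, haw, hwb, hwfree⟩ := hS.exists_chordFree_between hab hb habS
  obtain hw | hw := hv _ hwfree
  · rw [natCast_zmod_inj_of_lt (by omega) (by omega)] at hw
    omega
  · rw [← hw, ZMod.val_natCast_of_lt (by omega)]
    exact ⟨haw, hwb⟩

theorem NonCrossingChords.exists_eq_snakeChords (hS : NonCrossingChords (m + 4) S)
    (hcard : S.ncard = m + 1) (hfree : {v | ChordFree (m + 4) S v}.ncard = 2)
    (hlast : ChordFree (m + 4) S ((m + 3 : ℕ) : ZMod (m + 4))) :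
    ∃ p : ℕ → Bool, S = snakeChords m p := by
  obtain ⟨I, hIcard, hI⟩ := exists_finset_natCast_pairs fun e he => (hS.1 e he).1
  obtain ⟨v, hv⟩ := hS.exists_common_inner hfree hlast
  have hbound : ∀ i ∈ I, i.1 + 2 ≤ i.2 ∧ i.2 ≤ m + 2 := by
    intro i hi
    obtain ⟨hlt, hn, hmem⟩ := (hI i).1 hi
    have hchord := (isChord_natCast_iff hlt hn).1 (hS.1 _ hmem)
    have hne : i.2 ≠ m + 3 := by
      intro h
      rw [h] at hmem
      exact hlast _ hmem (Sym2.mem_mk_right _ _)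
    omega
  have hnested : ∀ i ∈ I, ∀ j ∈ I, i.1 ≤ j.1 ∧ j.2 ≤ i.2 ∨ j.1 ≤ i.1 ∧ i.2 ≤ j.2 := by
    intro i hi j hj
    obtain ⟨hi, hin, hiS⟩ := (hI i).1 hi
    obtain ⟨hj, hjn, hjS⟩ := (hI j).1 hj
    exact hS.nested_of_common_inner hin hjn hiS hjS (hv _ _ hi hin hiS) (hv _ _ hj hjn hjS)
  obtain ⟨p, hp⟩ := exists_path_of_nested hbound hnested (hIcard.trans hcard)
  refine ⟨p, Set.eq_of_subset_of_ncard_le (fun e he => ?_) (by rw [ncard_snakeChords, hcard])⟩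
  obtain ⟨a, b, hab, hb, rfl⟩ := exists_natCast_lt_of_not_isDiag (hS.1 e he).1
  exact (mk_natCast_mem_snakeChords_iff hab hb).2 (hp (a, b) ((hI _).2 ⟨hab, hb, he⟩))

theorem NonCrossingChords.exists_iso_snakeGraph (hS : NonCrossingChords (m + 4) S)
    (hcard : S.ncard = m + 1) (hfree : {v | ChordFree (m + 4) S v}.ncard = 2) :
    ∃ p : ℕ → Bool, p 0 = true ∧ Nonempty (cycleWithChords (m + 4) S ≃g snakeGraph m p) := by
  obtain ⟨c, hc⟩ : {v | ChordFree (m + 4) S v}.Nonempty :=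
    Set.nonempty_of_ncard_ne_zero (by omega)
  set σ := Equiv.addRight (c - ((m + 3 : ℕ) : ZMod (m + 4)))
  have hσ : σ ((m + 3 : ℕ) : ZMod (m + 4)) = c := by simp [σ]
  obtain ⟨p, hp⟩ := (hS.preimage_addRight _).exists_eq_snakeChords
    ((ncard_preimage_map_equiv σ).trans hcard)
    ((ncard_chordFree_preimage_map_equiv σ).trans hfree)
    ((chordFree_preimage_map_equiv_iff σ).2 (hσ ▸ hc))
  have f : cycleWithChords (m + 4) S ≃g snakeGraph m p :=
    (cycleWithChordsIso σ (isCycleEdge_map_addRight _) fun e => by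
      rw [← hp, Set.mem_preimage]).symm
  cases hp0 : p 0
  · exact ⟨fun t => !p t, by simp [hp0], ⟨f.trans (snakeGraphNotIso m p)⟩⟩
  · exact ⟨p, hp0, ⟨f⟩⟩

end StructureTheorem

section TypeA3

variable {k x : ℕ}

lemma isOuterplane_snakeGraph (m : ℕ) (p : ℕ → Bool) : IsOuterplane (m + 4) (snakeGraph m p) :=
  (isOuterplane_iff (by omega)).2 ⟨_, nonCrossingChords_snakeChords, rfl⟩

lemma degreeMultiset_snakeGraph_eq_iff (hx : 2 ≤ x) {p : ℕ → Bool} :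
    degreeMultiset (k * (x - 1) + 4) (snakeGraph (k * (x - 1)) p) =
        Multiset.replicate k (x + 2) + Multiset.replicate (k * (x - 2) + 2) 3 +
          Multiset.replicate 2 2 ↔
      HasFibersOneOr x (k * (x - 1)) p := by
  rw [eq_replicate_three_degrees_iff hx (card_degreeMultiset _),
    forall_mem_degreeMultiset_snakeGraph_iff, count_two_degreeMultiset_snakeGraph,
    card_degreeMultiset, sum_degreeMultiset_snakeGraph]
  simp only [and_self, and_true]

lemma hasFibersOneOr_zigzag_pred (hx : 2 ≤ x) :
    HasFibersOneOr x (k * (x - 1)) (zigzag (x - 1)) := by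
  have h := hasFibersOneOr_zigzag (by omega : 0 < x - 1) (dvd_mul_left (x - 1) k)
  rwa [Nat.sub_add_cancel (by omega)] at h

theorem iso_snakeGraph_zigzag (hx : 2 ≤ x) {G : SimpleGraph (ZMod (k * (x - 1) + 4))}
    (hG : IsOuterplane (k * (x - 1) + 4) G)
    (hdeg : degreeMultiset (k * (x - 1) + 4) G =
      Multiset.replicate k (x + 2) + Multiset.replicate (k * (x - 2) + 2) 3 +
        Multiset.replicate 2 2) :
    Nonempty (G ≃g snakeGraph (k * (x - 1)) (zigzag (x - 1))) := by
  obtain ⟨S, hS, rfl⟩ := (isOuterplane_iff (by omega)).1 hG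
  obtain ⟨-, hcount, hsum⟩ :=
    (eq_replicate_three_degrees_iff hx (card_degreeMultiset _)).1 hdeg
  rw [count_two_degreeMultiset_cycleWithChords (by omega) hS.1] at hcount
  rw [sum_degreeMultiset_cycleWithChords (by omega) hS.1, card_degreeMultiset] at hsum
  obtain ⟨p, hp0, ⟨f⟩⟩ := hS.exists_iso_snakeGraph (by omega) hcount
  have hp : HasFibersOneOr x (k * (x - 1)) p := by
    rw [← degreeMultiset_snakeGraph_eq_iff hx, ← degreeMultiset_congr f, hdeg]
  rw [← snakeGraph_congr (hp.eq_of_lt (hasFibersOneOr_zigzag_pred hx) (by rw [hp0, zigzag_zero]))]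
  exact ⟨f⟩

end TypeA3

/-- Type A3 of the paper's Theorem 1: for `n ≥ 5`, `x ≥ 2` with `x - 1 ∣ n - 4`,
the multiset `{(x+2)^((n-4)/(x-1)), 3^((n-4)(x-2)/(x-1)+2), 2^2}` is
outerplane-unigraphic. -/
theorem unigraphic_A3 (n x : ℕ) (hn : 5 ≤ n) (hx : 2 ≤ x)
    (hdvd : (x - 1) ∣ (n - 4)) :
    OuterplaneUnigraphic n
      (Multiset.replicate ((n - 4) / (x - 1)) (x + 2) +
        Multiset.replicate ((n - 4) * (x - 2) / (x - 1) + 2) 3 +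
        Multiset.replicate 2 2) := by
  obtain ⟨k, hk⟩ := hdvd
  obtain rfl : n = k * (x - 1) + 4 := by
    rw [mul_comm] at hk
    omega
  have hpos : 0 < x - 1 := by omega
  rw [Nat.add_sub_cancel, Nat.mul_div_cancel _ hpos, mul_right_comm, Nat.mul_div_cancel _ hpos]
  refine ⟨⟨_, isOuterplane_snakeGraph _ (zigzag (x - 1)),
    (degreeMultiset_snakeGraph_eq_iff hx).2 (hasFibersOneOr_zigzag_pred hx)⟩, ?_⟩
  intro G G' hG hG' hdeg hdeg'
  obtain ⟨f⟩ := iso_snakeGraph_zigzag hx hG hdeg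
  obtain ⟨f'⟩ := iso_snakeGraph_zigzag hx hG' hdeg'
  exact ⟨f.trans f'.symm⟩
end

section
/- Let n ≥ 7 and let x be an integer with ⌊n/2⌋ ≤ x ≤ n−4. Then the multiset {x+2, n−x, 3^(n−4), 2^2} is outerplane-unigraphic: there exists an outerplane graph on n vertices with this degree multiset, and any two outerplane graphs on n vertices with this degree multiset are isomorphic. (Type A4 of the paper's Theorem 1, corresponding to the polytope degree sequence p−1, x+3, p−x, 4^(p−5), 3^2 with p = n+1 ≥ 8 and ⌊(p−1)/2⌋ ≤ x ≤ p−5.) -/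
/-!
Removing the `n`-cycle lowers every degree by `2`, so the chord graph has two centres `a`, `b` whose
degrees add up to `n - 2`, two isolated vertices, and all other degrees equal to `1`. Counting
neighbours shows that it is a double star: `a` and `b` are adjacent, and every other non-isolated
vertex is a leaf attached to exactly one of them.

On the arc from `a` to `b`, non-crossing forces the leaves of `a` to precede those of `b`. Since
`a + 1` is no leaf of `a` and `b - 1` is no leaf of `b`, one of these two vertices is isolated. So
each of the two arcs contains exactly one isolated vertex, next to one of the centres, and all its
leaves hang on that centre. As both centres have chord degree at least `2`, the two arcs
are fanned from different centres, and a rotation or a reflection of the cycle brings the graph to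
a normal form that is determined by the chord degree of `a`.
-/

namespace Outerplane

theorem map_val_eq_coe_add_replicate_iff {V α : Type*} (f : V → α) (c : α)
    (L : List α) (s : Finset V) :
    s.val.map f = (L : Multiset α) + Multiset.replicate (s.card - L.length) c ↔
      ∃ l : List V, l.Nodup ∧ (∀ v ∈ l, v ∈ s) ∧ l.map f = L ∧ ∀ v ∈ s, v ∉ l → f v = c := by
  classical
  induction L generalizing s with
  | nil => simp [Multiset.eq_replicate]
  | cons a L ih =>
    rw [← Multiset.cons_coe, Multiset.cons_add, ← Multiset.map_eq_cons]
    have card_erase : ∀ v ∈ s, s.card - (a :: L).length = (s.erase v).card - L.length := by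
      intro v hv
      rw [Finset.card_erase_of_mem hv, List.length_cons]
      omega
    constructor
    · rintro ⟨v, hv, hfv, h⟩
      rw [card_erase v hv, ← Finset.erase_val, ih] at h
      obtain ⟨l, hl, hls, hlL, hrest⟩ := h
      exact ⟨v :: l, by grind, by grind, by grind, by grind⟩
    · rintro ⟨l, hl, hls, hlL, hrest⟩
      obtain ⟨v, l, rfl, hfv, rfl⟩ := List.map_eq_cons_iff.1 hlL
      have hv : v ∈ s := hls v List.mem_cons_self
      refine ⟨v, hv, hfv, ?_⟩
      rw [card_erase v hv, ← Finset.erase_val, ih]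
      exact ⟨l, by grind, by grind, rfl, by grind⟩

theorem degreeMultiset_eq_map_degree {n : ℕ} [NeZero n] (G : SimpleGraph (ZMod n))
    [G.LocallyFinite] : degreeMultiset n G = Finset.univ.val.map fun v ↦ G.degree v := by
  rw [degreeMultiset, dif_neg (NeZero.ne n), degMultiset]
  congr!

theorem adj_iff_adj_of_isVertexCover {V W : Type*} {H : SimpleGraph V} {H' : SimpleGraph W}
    {C : Set V} {φ : V ≃ W} (hC : H.IsVertexCover C) (hC' : H'.IsVertexCover (φ '' C))
    (hφ : ∀ c ∈ C, ∀ v, H.Adj c v ↔ H'.Adj (φ c) (φ v)) (u v : V) :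
    H.Adj u v ↔ H'.Adj (φ u) (φ v) := by
  by_cases hu : u ∈ C
  · exact hφ u hu v
  by_cases hv : v ∈ C
  · rw [H.adj_comm, H'.adj_comm, hφ v hv u]
  · have hu' : φ u ∉ φ '' C := by simpa using hu
    have hv' : φ v ∉ φ '' C := by simpa using hv
    exact iff_of_false (fun h ↦ (hC h).elim hu hv) (fun h ↦ (hC' h).elim hu' hv')

section DoubleStar

variable {V : Type*} {H : SimpleGraph V} {a b p q : V}

/-- `H` is a double star with adjacent centres `a` and `b`, together with two isolated
vertices `p` and `q`: every other vertex is a leaf attached to exactly one of the two centres. -/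
structure IsDoubleStar (H : SimpleGraph V) (a b p q : V) : Prop where
  isolated_ne : p ≠ q
  adj : H.Adj a b
  isVertexCover : H.IsVertexCover {a, b}
  adj_or_adj_iff : ∀ v, H.Adj a v ∨ H.Adj b v ↔ v ≠ p ∧ v ≠ q
  not_adj_of_adj : ∀ v, H.Adj a v → ¬ H.Adj b v

namespace IsDoubleStar

theorem swap_centres (h : IsDoubleStar H a b p q) : IsDoubleStar H b a p q where
  isolated_ne := h.isolated_ne
  adj := h.adj.symm
  isVertexCover := Set.pair_comm a b ▸ h.isVertexCover
  adj_or_adj_iff v := or_comm.trans (h.adj_or_adj_iff v)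
  not_adj_of_adj v hb ha := h.not_adj_of_adj v ha hb

theorem swap_isolated (h : IsDoubleStar H a b p q) : IsDoubleStar H a b q p :=
  { h with
    isolated_ne := h.isolated_ne.symm
    adj_or_adj_iff := fun v ↦ (h.adj_or_adj_iff v).trans and_comm }

theorem nodup (h : IsDoubleStar H a b p q) : [a, b, p, q].Nodup := by
  have ha := (h.adj_or_adj_iff a).1 (.inr h.adj.symm)
  have hb := (h.adj_or_adj_iff b).1 (.inl h.adj)
  simp [h.adj.ne, h.isolated_ne, ha, hb]

theorem adj_left_iff_of_arcs (h : IsDoubleStar H a b p q) {arc arc' : V → Prop}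
    (hcover : ∀ v, v ≠ a → v ≠ b → arc v ∨ arc' v) (ha : ∀ v, arc v → v ≠ p → H.Adj a v)
    (hb : ∀ v, arc' v → v ≠ q → H.Adj b v) (v : V) : H.Adj a v ↔ v = b ∨ arc v ∧ v ≠ p := by
  constructor
  · intro hav
    obtain ⟨hvp, hvq⟩ := (h.adj_or_adj_iff v).1 (.inl hav)
    rw [or_iff_not_imp_left]
    intro hvb
    have hv : ¬ arc' v := fun hv ↦ h.not_adj_of_adj v hav (hb v hv hvq)
    exact ⟨(hcover v hav.ne' hvb).resolve_right hv, hvp⟩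
  · rintro (rfl | ⟨hv, hvp⟩)
    exacts [h.adj, ha v hv hvp]

variable [H.LocallyFinite]

theorem degree_eq_zero (h : IsDoubleStar H a b p q) : H.degree p = 0 := by
  rw [SimpleGraph.degree_eq_zero]
  intro v hpv
  have hpa : ¬ H.Adj a p := fun hadj ↦ ((h.adj_or_adj_iff p).1 (.inl hadj)).1 rfl
  have hpb : ¬ H.Adj b p := fun hadj ↦ ((h.adj_or_adj_iff p).1 (.inr hadj)).1 rfl
  rcases h.isVertexCover hpv with (rfl | rfl) | (rfl | rfl)
  exacts [hpb h.adj.symm, hpa h.adj, hpa hpv.symm, hpb hpv.symm]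

theorem degree_eq_one (h : IsDoubleStar H a b p q) {v : V} (hv : v ∉ [a, b, p, q]) :
    H.degree v = 1 := by
  simp only [List.mem_cons, List.not_mem_nil, or_false, not_or] at hv
  obtain ⟨hva, hvb, hvp, hvq⟩ := hv
  have hnbr : ∀ w, H.Adj v w → w = a ∨ w = b := fun w hvw ↦
    (h.isVertexCover hvw).resolve_left (by simp [hva, hvb])
  rw [SimpleGraph.degree_eq_one_iff_existsUnique_adj]
  rcases (h.adj_or_adj_iff v).2 ⟨hvp, hvq⟩ with hav | hbv
  · exact ⟨a, hav.symm, fun w hw ↦ (hnbr w hw).resolve_right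
      (by rintro rfl; exact h.not_adj_of_adj v hav hw.symm)⟩
  · exact ⟨b, hbv.symm, fun w hw ↦ (hnbr w hw).resolve_left
      (by rintro rfl; exact h.not_adj_of_adj v hw.symm hbv)⟩

theorem degree_right_le_one_of_arcs (h : IsDoubleStar H a b p q) {arc arc' : V → Prop}
    (hcover : ∀ v, v ≠ a → v ≠ b → arc v ∨ arc' v) (ha : ∀ v, arc v → v ≠ p → H.Adj a v)
    (ha' : ∀ v, arc' v → v ≠ q → H.Adj a v) : H.degree b ≤ 1 := by
  have : Nonempty V := ⟨a⟩
  rw [← H.card_neighborFinset_eq_degree, Finset.card_le_one_iff_subset_singleton]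
  refine ⟨a, fun v hv ↦ Finset.mem_singleton.2 ?_⟩
  rw [SimpleGraph.mem_neighborFinset] at hv
  obtain ⟨hvp, hvq⟩ := (h.adj_or_adj_iff v).1 (.inr hv)
  by_contra hva
  rcases hcover v hva hv.ne' with harc | harc
  exacts [h.not_adj_of_adj v (ha v harc hvp) hv, h.not_adj_of_adj v (ha' v harc hvq) hv]

theorem degree_add_degree [Fintype V] (h : IsDoubleStar H a b p q) :
    H.degree a + H.degree b + 2 = Fintype.card V := by
  classical
  have hdisj : Disjoint (H.neighborFinset a) (H.neighborFinset b) :=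
    Finset.disjoint_left.2 (by simpa using h.not_adj_of_adj)
  have hunion : H.neighborFinset a ∪ H.neighborFinset b = {p, q}ᶜ := by
    ext v
    simp [h.adj_or_adj_iff]
  rw [← H.card_neighborFinset_eq_degree, ← H.card_neighborFinset_eq_degree,
    ← Finset.card_union_of_disjoint hdisj, hunion, ← Finset.card_pair h.isolated_ne,
    Finset.card_compl_add_card]

end IsDoubleStar

theorem isDoubleStar_of_degree [Fintype V] [H.LocallyFinite] (hnodup : [a, b, p, q].Nodup)
    (hab : H.degree a + H.degree b + 2 = Fintype.card V) (hp : H.degree p = 0)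
    (hq : H.degree q = 0) (hone : ∀ v ∉ [a, b, p, q], H.degree v = 1) :
    IsDoubleStar H a b p q := by
  classical
  have hnp : ∀ v, ¬ H.Adj v p := fun v hv ↦ (H.degree_eq_zero p).1 hp v hv.symm
  have hnq : ∀ v, ¬ H.Adj v q := fun v hv ↦ (H.degree_eq_zero q).1 hq v hv.symm
  have hunique : ∀ v u w, v ≠ a → v ≠ b → H.Adj v u → H.Adj v w → u = w := by
    intro v u w hva hvb hvu hvw
    have hdeg : H.degree v = 1 := hone v (by grind [H.adj_comm])
    exact (SimpleGraph.degree_eq_one_iff_existsUnique_adj.1 hdeg).unique hvu hvw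
  have hnot : ∀ v, H.Adj a v → ¬ H.Adj b v := fun v hav hbv ↦
    (by grind : a ≠ b) (hunique v a b hav.ne' hbv.ne' hav.symm hbv.symm)
  -- The two neighbourhoods are disjoint and have `card V - 2` elements in total, so they fill
  -- the complement of `{p, q}`.
  have hunion : H.neighborFinset a ∪ H.neighborFinset b = {p, q}ᶜ := by
    have hdisj : Disjoint (H.neighborFinset a) (H.neighborFinset b) :=
      Finset.disjoint_left.2 (by simpa using hnot)
    refine Finset.eq_of_subset_of_card_le (fun v hv ↦ ?_) ?_
    · simp only [Finset.mem_union, SimpleGraph.mem_neighborFinset] at hv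
      simp only [Finset.mem_compl, Finset.mem_insert, Finset.mem_singleton]
      grind
    · rw [Finset.card_union_of_disjoint hdisj, Finset.card_compl,
        Finset.card_pair (by grind : p ≠ q), H.card_neighborFinset_eq_degree,
        H.card_neighborFinset_eq_degree]
      omega
  have hiff : ∀ v, H.Adj a v ∨ H.Adj b v ↔ v ≠ p ∧ v ≠ q := by
    simpa [Finset.ext_iff] using hunion
  refine ⟨by grind, ?_, fun u v huv ↦ ?_, hiff, hnot⟩
  · simpa [H.adj_comm] using (hiff a).2 (by grind)
  · by_contra! hcov
    simp only [Set.mem_insert_iff, Set.mem_singleton_iff, not_or] at hcov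
    obtain ⟨⟨hua, hub⟩, hva, hvb⟩ := hcov
    rcases (hiff v).2 (by grind) with hav | hbv
    · exact hua (hunique v u a hva hvb huv.symm hav.symm)
    · exact hub (hunique v u b hva hvb huv.symm hbv.symm)

end DoubleStar

section CyclicOrder

variable {n : ℕ} {a b c d v : ZMod n}

theorem isCycleEdge_iff : IsCycleEdge n s(a, b) ↔ b = a + 1 ∨ a = b + 1 := by
  constructor
  · rintro ⟨i, hi⟩
    grind [Sym2.eq_iff]
  · rintro (rfl | rfl)
    exacts [⟨a, rfl⟩, ⟨b, Sym2.eq_swap⟩]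

theorem cross_mk_mk_iff : Cross n s(a, b) s(c, d) ↔
    Xor (Between n a b c) (Between n a b d) ∧ Xor (Between n b a c) (Between n b a d) := by
  constructor
  · exact fun h ↦ ⟨h a b c d rfl rfl, h b a c d Sym2.eq_swap rfl⟩
  · rintro ⟨hab, hba⟩ a' b' c' d' he hf
    rw [Sym2.eq_iff] at he hf
    rcases he with ⟨rfl, rfl⟩ | ⟨rfl, rfl⟩ <;> rcases hf with ⟨rfl, rfl⟩ | ⟨rfl, rfl⟩
    exacts [hab, (xor_comm _ _).mp hab, hba, (xor_comm _ _).mp hba]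

theorem val_sub_pos_iff : 0 < (b - a).val ↔ b ≠ a := by
  rw [Nat.pos_iff_ne_zero, Ne, ZMod.val_eq_zero, sub_eq_zero]

/-- The fan at `a` in the arc from `a` to `b`: the vertices after `a + 1`, up to and including `b`,
in the direction of increasing residues. -/
def FanArc (n : ℕ) (a b v : ZMod n) : Prop :=
  1 < (v - a).val ∧ (v - a).val ≤ (b - a).val

theorem fanArc_sub_right (c : ZMod n) : FanArc n (a - c) (b - c) (v - c) ↔ FanArc n a b v := by
  simp only [FanArc, sub_sub_sub_cancel_right]

variable [NeZero n]

theorem val_sub_eq_ite (a b v : ZMod n) :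
    (v - b).val = if (b - a).val ≤ (v - a).val then (v - a).val - (b - a).val
      else (v - a).val + n - (b - a).val := by
  have hb := (b - a).val_lt
  rw [← sub_sub_sub_cancel_right v b a]
  split_ifs with h
  · exact ZMod.val_sub h
  · have hne : (b - a) - (v - a) ≠ 0 := fun h0 ↦ h (by rw [sub_eq_zero.1 h0])
    rw [← neg_sub, ZMod.neg_val, if_neg hne, ZMod.val_sub (by omega)]
    omega

theorem val_sub_add_val_sub (h : a ≠ b) : (b - a).val + (a - b).val = n := by
  have hlt := (b - a).val_lt
  rw [← neg_sub b a, ZMod.neg_val, if_neg (sub_ne_zero.2 h.symm)]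
  omega

theorem val_sub_injective (a : ZMod n) : Function.Injective fun v ↦ (v - a).val :=
  (ZMod.val_injective n).comp sub_left_injective

theorem val_sub_eq_one_iff (hn : 1 < n) : (b - a).val = 1 ↔ b = a + 1 := by
  rw [← ZMod.val_one'' hn.ne', (ZMod.val_injective n).eq_iff, sub_eq_iff_eq_add']

theorem isChord_iff : IsChord n s(a, b) ↔ 1 < (b - a).val ∧ 1 < (a - b).val := by
  have hlt := (b - a).val_lt
  have hab := val_sub_pos_iff (a := a) (b := b)
  have hba := val_sub_pos_iff (a := b) (b := a)
  rw [IsChord, isCycleEdge_iff, Sym2.mk_isDiag_iff]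
  rcases le_or_gt n 1 with hn | hn
  · grind
  · rw [← val_sub_eq_one_iff hn, ← val_sub_eq_one_iff hn]
    grind

theorem val_sub_one_sub (h : a ≠ b) : (b - 1 - a).val = (b - a).val - 1 := by
  have hpos := val_sub_pos_iff.2 h.symm
  have hn := (b - a).val_lt
  have hone : (1 : ZMod n).val = 1 := ZMod.val_one'' (by omega)
  rw [sub_right_comm, ZMod.val_sub (by omega), hone]

theorem between_sub_left (c : ZMod n) :
    Between n (c - a) (c - b) (c - v) ↔ Between n b a v := by
  have hlt := (v - b).val_lt
  simp only [Between, sub_sub_sub_cancel_left, val_sub_eq_ite b v a]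
  split_ifs <;> omega

theorem not_between_swap (h : Between n a b v) : ¬ Between n b a v := by
  have haa : (a - a).val = 0 := by simp
  simp only [Between, val_sub_eq_ite a b, haa] at h ⊢
  split_ifs <;> omega

theorem between_or_between (hab : a ≠ b) (ha : v ≠ a) (hb : v ≠ b) :
    Between n a b v ∨ Between n b a v := by
  have haa : (a - a).val = 0 := by simp
  have hb_pos := val_sub_pos_iff.2 hab.symm
  have hv_pos := val_sub_pos_iff.2 ha
  have hne : (v - a).val ≠ (b - a).val := (val_sub_injective a).ne hb
  have hlt := (v - a).val_lt
  simp only [Between, val_sub_eq_ite a b, haa]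
  split_ifs <;> omega

theorem cross_of_between (hb : Between n a c b) (hc : Between n a d c) :
    Cross n s(a, c) s(b, d) := by
  have haa : (a - a).val = 0 := by simp
  have hlt := (d - a).val_lt
  simp only [cross_mk_mk_iff, Between, val_sub_eq_ite a c, haa, xor_iff_not_iff] at *
  split_ifs <;> omega

theorem not_cross_of_common_vertex : ¬ Cross n s(a, b) s(a, d) := by
  have haa : (a - a).val = 0 := by simp
  have hlt := (d - a).val_lt
  simp only [cross_mk_mk_iff, Between, val_sub_eq_ite a b, haa, xor_iff_not_iff] at *
  split_ifs <;> omega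

theorem between_add_one (hab : 1 < (b - a).val) : Between n a b (a + 1) := by
  have hn := (b - a).val_lt
  rw [Between, (val_sub_eq_one_iff (by omega)).2 rfl]
  exact ⟨one_pos, hab⟩

theorem between_sub_one (hab : 1 < (b - a).val) : Between n a b (b - 1) := by
  rw [Between, val_sub_one_sub (val_sub_pos_iff.1 (by omega)).symm]
  omega

theorem between_add_one_of_between (h : Between n a b v) (hv : v ≠ a + 1) :
    Between n a v (a + 1) := by
  have hn := (b - a).val_lt
  rw [Ne, ← val_sub_eq_one_iff (by grind [Between])] at hv
  exact between_add_one (by grind [Between])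

theorem between_sub_one_of_between (h : Between n a b v) (hv : v ≠ b - 1) :
    Between n a (b - 1) v := by
  have hne : (v - a).val ≠ (b - 1 - a).val := (val_sub_injective a).ne hv
  obtain ⟨hpos, hlt⟩ := h
  rw [Between]
  rw [val_sub_one_sub (val_sub_pos_iff.1 (by omega)).symm] at hne ⊢
  omega

theorem fanArc_iff (hab : 1 < (b - a).val) :
    FanArc n a b v ↔ v = b ∨ Between n a b v ∧ v ≠ a + 1 := by
  have hn := (b - a).val_lt
  have heq : (v - a).val = (b - a).val ↔ v = b := (val_sub_injective a).eq_iff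
  rw [FanArc, Between, Ne, ← val_sub_eq_one_iff (by omega), ← heq]
  omega

theorem fanArc_sub_left (c : ZMod n) (hba : 1 < (a - b).val) :
    FanArc n (c - a) (c - b) (c - v) ↔ v = b ∨ Between n b a v ∧ v ≠ a - 1 := by
  rw [fanArc_iff (by rwa [sub_sub_sub_cancel_left]), between_sub_left, sub_right_inj, Ne,
    sub_add, sub_right_inj]

theorem card_filter_fanArc [DecidablePred (FanArc n a b)] :
    (Finset.univ.filter (FanArc n a b)).card = (b - a).val - 1 := by
  rw [← Nat.card_Ioc]
  refine Finset.card_bij (fun v _ ↦ (v - a).val) (fun v hv ↦ ?_)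
    (fun v _ w _ h ↦ val_sub_injective a h) (fun k hk ↦ ?_)
  · exact Finset.mem_Ioc.2 (Finset.mem_filter.1 hv).2
  · rw [Finset.mem_Ioc] at hk
    have hval : (a + (k : ZMod n) - a).val = k := by
      rw [add_sub_cancel_left, ZMod.val_cast_of_lt (hk.2.trans_lt (b - a).val_lt)]
    exact ⟨a + k, by simpa only [Finset.mem_filter_univ, FanArc, hval] using hk, hval⟩

theorem isChord_of_fanArc (hba : 1 < (a - b).val) (hv : FanArc n a b v) : IsChord n s(a, v) := by
  obtain ⟨hav, hvb⟩ := hv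
  have hsum_b := val_sub_add_val_sub (a := a) (b := b) (val_sub_pos_iff.1 (by omega))
  have hsum_v := val_sub_add_val_sub (a := a) (b := v) (val_sub_pos_iff.1 (by omega)).symm
  exact isChord_iff.2 ⟨hav, by omega⟩

theorem not_cross_of_fanArc (hc : FanArc n a b c) (hd : FanArc n b a d) :
    ¬ Cross n s(a, c) s(b, d) := by
  rw [cross_mk_mk_iff]
  rintro ⟨hx, -⟩
  have haa : (a - a).val = 0 := by simp
  have hlt := (d - a).val_lt
  simp only [FanArc, Between, val_sub_eq_ite a b, haa, xor_iff_not_iff] at *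
  split_ifs at hd <;> omega

theorem not_fanArc_swap (h : FanArc n a b v) : ¬ FanArc n b a v := by
  have haa : (a - a).val = 0 := by simp
  simp only [FanArc, val_sub_eq_ite a b, haa] at h ⊢
  split_ifs <;> omega

theorem fanArc_or_fanArc_iff (h : IsChord n s(a, b)) :
    FanArc n a b v ∨ FanArc n b a v ↔ v ≠ a + 1 ∧ v ≠ b + 1 := by
  obtain ⟨hab, hba⟩ := isChord_iff.1 h
  have hn := (b - a).val_lt
  have hlt := (v - a).val_lt
  have haa : (a - a).val = 0 := by simp
  rw [Ne, Ne, ← val_sub_eq_one_iff (by omega), ← val_sub_eq_one_iff (by omega)]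
  simp only [FanArc, val_sub_eq_ite a b, haa] at hba ⊢
  split_ifs at hba ⊢ <;> omega

end CyclicOrder

section OuterplaneGraph

open SimpleGraph

variable {n : ℕ} {S : Set (Sym2 (ZMod n))} {a b c d p q u v : ZMod n}

/-- The standard `n`-cycle on `ZMod n`, as a circulant graph. -/
abbrev polygon (n : ℕ) : SimpleGraph (ZMod n) :=
  circulantGraph {1}

theorem polygon_eq_fromEdgeSet : polygon n = fromEdgeSet {e | IsCycleEdge n e} := by
  ext u v
  simp only [circulantGraph_adj, Set.mem_singleton_iff, fromEdgeSet_adj, Set.mem_ofPred_eq,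
    isCycleEdge_iff, sub_eq_iff_eq_add']
  tauto

theorem isOuterplane_iff (hn : n ≠ 1) {G : SimpleGraph (ZMod n)} : IsOuterplane n G ↔
    ∃ S, NonCrossingChords n S ∧ G = polygon n ⊔ chordGraph n S := by
  refine exists_congr fun S ↦ and_congr_right fun hS ↦ ?_
  have : Nontrivial (ZMod n) := ZMod.nontrivial_iff.2 hn
  have hdisj : Disjoint ({e | IsCycleEdge n e} ∪ S) Sym2.diagSet := by
    rw [Set.disjoint_left]
    rintro e (⟨i, rfl⟩ | he) hdiag
    · simp at hdiag
    · exact (hS.1 e he).1 hdiag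
  rw [edgeSet_eq_iff, fromEdgeSet_union, polygon_eq_fromEdgeSet, chordGraph]
  exact and_iff_left hdisj

theorem chordGraph_adj_iff (hS : NonCrossingChords n S) :
    (chordGraph n S).Adj u v ↔ s(u, v) ∈ S :=
  ⟨And.left, fun h ↦ ⟨h, (hS.1 _ h).1⟩⟩

theorem isChord_of_adj (hS : NonCrossingChords n S) (h : (chordGraph n S).Adj u v) :
    IsChord n s(u, v) :=
  hS.1 _ ((chordGraph_adj_iff hS).1 h)

theorem not_adj_add_one (hS : NonCrossingChords n S) : ¬ (chordGraph n S).Adj v (v + 1) :=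
  fun h ↦ (isChord_of_adj hS h).2 ⟨v, rfl⟩

theorem not_adj_sub_one (hS : NonCrossingChords n S) : ¬ (chordGraph n S).Adj v (v - 1) :=
  fun h ↦ (isChord_of_adj hS h).2 (isCycleEdge_iff.2 (.inr (sub_add_cancel v 1).symm))

theorem disjoint_polygon_chordGraph (hS : NonCrossingChords n S) :
    Disjoint (polygon n) (chordGraph n S) := by
  rw [SimpleGraph.disjoint_left]
  intro u v huv hadj
  rw [polygon_eq_fromEdgeSet] at huv
  exact (isChord_of_adj hS hadj).2 huv.1

theorem degree_polygon [(polygon n).LocallyFinite] (hn : 2 < n) (v : ZMod n) :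
    (polygon n).degree v = 2 := by
  have : Fact (2 < n) := ⟨hn⟩
  have hne : v + 1 ≠ v - 1 := by
    rw [sub_eq_add_neg]
    exact (add_right_injective v).ne ZMod.neg_one_ne_one.symm
  rw [← card_neighborFinset_eq_degree, ← Finset.card_pair hne]
  congr 1
  ext w
  simp only [mem_neighborFinset, circulantGraph_adj, Set.mem_singleton_iff, Finset.mem_insert]
  grind

theorem degree_polygon_sup_chordGraph [(polygon n ⊔ chordGraph n S).LocallyFinite]
    [(chordGraph n S).LocallyFinite] (hn : 2 < n) (hS : NonCrossingChords n S) (v : ZMod n) :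
    (polygon n ⊔ chordGraph n S).degree v = (chordGraph n S).degree v + 2 := by
  classical
  have : NeZero n := ⟨by omega⟩
  rw [← card_neighborFinset_eq_degree,
    neighborFinset_sup_of_disjoint _ (disjoint_polygon_chordGraph hS), Finset.card_disjUnion,
    card_neighborFinset_eq_degree, card_neighborFinset_eq_degree, degree_polygon hn, add_comm]

variable [NeZero n]

theorem not_between_of_adj_of_adj (hS : NonCrossingChords n S)
    (hac : (chordGraph n S).Adj a c) (hbd : (chordGraph n S).Adj b d) (hb : Between n a c b) :
    ¬ Between n a d c := by
  intro hc
  rw [chordGraph_adj_iff hS] at hac hbd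
  refine hS.2 _ hac _ hbd (fun heq ↦ ?_) (cross_of_between hb hc)
  have haa : (a - a).val = 0 := by simp
  grind [Between, Sym2.eq_iff]

theorem isolated_between_of_isDoubleStar (hS : NonCrossingChords n S)
    (h : IsDoubleStar (chordGraph n S) a b p q) : Between n a b p ∨ Between n a b q := by
  by_contra! hpq
  obtain ⟨hab, -⟩ := isChord_iff.1 (isChord_of_adj hS h.adj)
  have hfirst := between_add_one hab
  have hlast := between_sub_one hab
  have hfirst_adj : (chordGraph n S).Adj b (a + 1) :=
    ((h.adj_or_adj_iff _).2 (by grind)).resolve_left (not_adj_add_one hS)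
  have hlast_adj : (chordGraph n S).Adj a (b - 1) :=
    ((h.adj_or_adj_iff _).2 (by grind)).resolve_right (not_adj_sub_one hS)
  have hne : a + 1 ≠ b - 1 := fun heq ↦ not_adj_sub_one hS (heq ▸ hfirst_adj)
  exact not_between_of_adj_of_adj hS hlast_adj hfirst_adj.symm
    (between_sub_one_of_between hfirst hne) hlast

theorem isolated_between_and_between_of_isDoubleStar (hS : NonCrossingChords n S)
    (h : IsDoubleStar (chordGraph n S) a b p q) :
    Between n a b p ∧ Between n b a q ∨ Between n a b q ∧ Between n b a p := by
  have hab := isolated_between_of_isDoubleStar hS h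
  have hba := isolated_between_of_isDoubleStar hS h.swap_centres
  have hp := not_between_swap (a := a) (b := b) (v := p)
  have hq := not_between_swap (a := a) (b := b) (v := q)
  tauto

theorem fan_left_or_fan_right_of_isDoubleStar (hS : NonCrossingChords n S)
    (h : IsDoubleStar (chordGraph n S) a b p q) (hq : ¬ Between n a b q) :
    (p = a + 1 ∧ ∀ v, Between n a b v → v ≠ p → (chordGraph n S).Adj a v) ∨
      (p = b - 1 ∧ ∀ v, Between n a b v → v ≠ p → (chordGraph n S).Adj b v) := by
  obtain ⟨hab, -⟩ := isChord_iff.1 (isChord_of_adj hS h.adj)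
  have hadj : ∀ v, Between n a b v → v ≠ p →
      (chordGraph n S).Adj a v ∨ (chordGraph n S).Adj b v :=
    fun v hv hvp ↦ (h.adj_or_adj_iff v).2 ⟨hvp, fun hvq ↦ hq (hvq ▸ hv)⟩
  by_cases hpa : p = a + 1
  · refine .inl ⟨hpa, fun v hv hvp ↦ (hadj v hv hvp).resolve_right fun hbv ↦ ?_⟩
    have hv_lt : Between n a (b - 1) v :=
      between_sub_one_of_between hv fun heq ↦ not_adj_sub_one hS (heq ▸ hbv)
    have hlast : b - 1 ≠ p := by
      have := between_add_one_of_between hv (hpa ▸ hvp)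
      grind [Between]
    have hlast_adj := (hadj _ (between_sub_one hab) hlast).resolve_right (not_adj_sub_one hS)
    exact not_between_of_adj_of_adj hS hlast_adj hbv.symm hv_lt (between_sub_one hab)
  · have hfirst_adj := (hadj _ (between_add_one hab) (Ne.symm hpa)).resolve_left
      (not_adj_add_one hS)
    have hright : ∀ v, Between n a b v → v ≠ p → (chordGraph n S).Adj b v := by
      refine fun v hv hvp ↦ (hadj v hv hvp).resolve_left fun hav ↦ ?_
      have hv_gt : Between n a v (a + 1) :=
        between_add_one_of_between hv fun heq ↦ not_adj_add_one hS (heq ▸ hav)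
      exact not_between_of_adj_of_adj hS hav hfirst_adj.symm hv_gt hv
    refine .inr ⟨?_, hright⟩
    by_contra hpb
    exact not_adj_sub_one hS (hright _ (between_sub_one hab) (Ne.symm hpb))

/-- The rotation of the standard `n`-cycle taking `a` to `0`. -/
def rotation (a : ZMod n) : polygon n ≃g polygon n where
  toEquiv := Equiv.subRight a
  map_rel_iff' := by simp

/-- The reflection of the standard `n`-cycle taking `a` to `0`. -/
def reflection (a : ZMod n) : polygon n ≃g polygon n where
  toEquiv := Equiv.subLeft a
  map_rel_iff' := by simp [or_comm]

theorem exists_iso_adj_iff_fanArc [(chordGraph n S).LocallyFinite] (hS : NonCrossingChords n S)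
    (h : IsDoubleStar (chordGraph n S) a b p q) (ha : 1 < (chordGraph n S).degree a)
    (hb : 1 < (chordGraph n S).degree b) :
    ∃ φ : polygon n ≃g polygon n, φ a = 0 ∧
      (∀ v, (chordGraph n S).Adj a v ↔ FanArc n (φ a) (φ b) (φ v)) ∧
      ∀ v, (chordGraph n S).Adj b v ↔ FanArc n (φ b) (φ a) (φ v) := by
  obtain ⟨hab, hba⟩ := isChord_iff.1 (isChord_of_adj hS h.adj)
  wlog hpq : Between n a b p ∧ Between n b a q generalizing p q
  · exact this h.swap_isolated
      ((isolated_between_and_between_of_isDoubleStar hS h).resolve_left hpq)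
  obtain ⟨hp, hq⟩ := hpq
  have hcover (v : ZMod n) (ha : v ≠ a) (hb : v ≠ b) : Between n a b v ∨ Between n b a v :=
    between_or_between h.adj.ne ha hb
  rcases fan_left_or_fan_right_of_isDoubleStar hS h (fun h ↦ not_between_swap h hq) with
      ⟨rfl, hleft⟩ | ⟨rfl, hleft⟩ <;>
    rcases fan_left_or_fan_right_of_isDoubleStar hS h.swap_centres.swap_isolated
      (not_between_swap hp) with ⟨rfl, hright⟩ | ⟨rfl, hright⟩
  · refine ⟨rotation a, sub_self a, fun v ↦ ?_, fun v ↦ ?_⟩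
    · refine (h.adj_left_iff_of_arcs hcover hleft hright v).trans ?_
      exact (fanArc_iff hab).symm.trans (fanArc_sub_right a).symm
    · refine (h.swap_centres.swap_isolated.adj_left_iff_of_arcs
        (fun v hb ha ↦ (hcover v ha hb).symm) hright hleft v).trans ?_
      exact (fanArc_iff hba).symm.trans (fanArc_sub_right a).symm
  · exact absurd (h.degree_right_le_one_of_arcs hcover hleft hright) hb.not_ge
  · exact absurd (h.swap_centres.degree_right_le_one_of_arcs
      (fun v hb ha ↦ hcover v ha hb) hleft hright) ha.not_ge
  · refine ⟨reflection a, sub_self a, fun v ↦ ?_, fun v ↦ ?_⟩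
    · refine (h.swap_isolated.adj_left_iff_of_arcs
        (fun v ha hb ↦ (hcover v ha hb).symm) hright hleft v).trans ?_
      exact (fanArc_sub_left a hba).symm
    · refine (h.swap_centres.adj_left_iff_of_arcs
        (fun v hb ha ↦ hcover v ha hb) hleft hright v).trans ?_
      exact (fanArc_sub_left a hab).symm

end OuterplaneGraph

section DoubleFan

variable {n : ℕ} {S : Set (Sym2 (ZMod n))} {a b p q v : ZMod n}

/-- The chords of the double fan with centres `a` and `b`: each centre is joined to the fan in the
arc that starts at it, and the chord between the centres belongs to both fans. -/
def doubleFanChords (n : ℕ) (a b : ZMod n) : Set (Sym2 (ZMod n)) :=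
  (s(a, ·)) '' {v | FanArc n a b v} ∪ (s(b, ·)) '' {v | FanArc n b a v}

theorem doubleFanChords_comm (a b : ZMod n) : doubleFanChords n a b = doubleFanChords n b a :=
  Set.union_comm _ _

/-- The double fan with centres `a` and `b`: the standard `n`-cycle with the chords of
`doubleFanChords n a b`. -/
def doubleFan (n : ℕ) (a b : ZMod n) : SimpleGraph (ZMod n) :=
  polygon n ⊔ chordGraph n (doubleFanChords n a b)

variable [NeZero n]

theorem nonCrossingChords_doubleFanChords (h : IsChord n s(a, b)) :
    NonCrossingChords n (doubleFanChords n a b) := by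
  obtain ⟨hab, hba⟩ := isChord_iff.1 h
  refine ⟨?_, ?_⟩
  · rintro _ (⟨v, hv, rfl⟩ | ⟨v, hv, rfl⟩)
    exacts [isChord_of_fanArc hba hv, isChord_of_fanArc hab hv]
  · rintro _ (⟨v, hv, rfl⟩ | ⟨v, hv, rfl⟩) _ (⟨w, hw, rfl⟩ | ⟨w, hw, rfl⟩) -
    exacts [not_cross_of_common_vertex, not_cross_of_fanArc hv hw, not_cross_of_fanArc hv hw,
      not_cross_of_common_vertex]

theorem chordGraph_doubleFanChords_adj_left_iff (h : IsChord n s(a, b)) :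
    (chordGraph n (doubleFanChords n a b)).Adj a v ↔ FanArc n a b v := by
  obtain ⟨hab, hba⟩ := isChord_iff.1 h
  rw [chordGraph_adj_iff (nonCrossingChords_doubleFanChords h)]
  constructor
  · rintro (⟨w, hw, heq⟩ | ⟨w, hw, heq⟩)
    · rwa [← Sym2.congr_right.1 heq]
    · rw [Sym2.eq_iff] at heq
      have hvb : v = b := by
        rcases heq with ⟨rfl, -⟩ | ⟨rfl, -⟩
        exacts [absurd rfl h.1, rfl]
      subst hvb
      exact ⟨hab, le_rfl⟩
  · exact fun hv ↦ .inl ⟨v, hv, rfl⟩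

theorem chordGraph_doubleFanChords_adj_right_iff (h : IsChord n s(a, b)) :
    (chordGraph n (doubleFanChords n a b)).Adj b v ↔ FanArc n b a v := by
  rw [doubleFanChords_comm]
  exact chordGraph_doubleFanChords_adj_left_iff (Sym2.eq_swap ▸ h)

theorem isDoubleStar_doubleFanChords (h : IsChord n s(a, b)) :
    IsDoubleStar (chordGraph n (doubleFanChords n a b)) a b (a + 1) (b + 1) where
  isolated_ne heq := h.1 (add_right_cancel heq)
  adj := (chordGraph_doubleFanChords_adj_left_iff h).2 ⟨(isChord_iff.1 h).1, le_rfl⟩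
  isVertexCover u v huv := by
    obtain ⟨⟨w, -, heq⟩ | ⟨w, -, heq⟩, -⟩ := huv <;> grind [Sym2.eq_iff]
  adj_or_adj_iff v := by
    rw [chordGraph_doubleFanChords_adj_left_iff h, chordGraph_doubleFanChords_adj_right_iff h,
      fanArc_or_fanArc_iff h]
  not_adj_of_adj v := by
    rw [chordGraph_doubleFanChords_adj_left_iff h, chordGraph_doubleFanChords_adj_right_iff h]
    exact not_fanArc_swap

theorem degree_chordGraph_doubleFanChords (h : IsChord n s(a, b))
    [(chordGraph n (doubleFanChords n a b)).LocallyFinite] :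
    (chordGraph n (doubleFanChords n a b)).degree a = (b - a).val - 1 := by
  classical
  rw [← SimpleGraph.card_neighborFinset_eq_degree, ← card_filter_fanArc]
  congr 1
  ext v
  simp [chordGraph_doubleFanChords_adj_left_iff h]

theorem nonempty_iso_doubleFan [(chordGraph n S).LocallyFinite] (hS : NonCrossingChords n S)
    (h : IsDoubleStar (chordGraph n S) a b p q) (ha : 1 < (chordGraph n S).degree a)
    (hb : 1 < (chordGraph n S).degree b) :
    Nonempty (polygon n ⊔ chordGraph n S ≃g
      doubleFan n 0 ((chordGraph n S).degree a + 1 : ℕ)) := by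
  classical
  obtain ⟨φ, hφ, hadj_a, hadj_b⟩ := exists_iso_adj_iff_fanArc hS h ha hb
  have hchord : IsChord n s(φ a, φ b) :=
    isChord_iff.2 ⟨((hadj_a b).1 h.adj).1, ((hadj_b a).1 h.adj.symm).1⟩
  have hiff := adj_iff_adj_of_isVertexCover (φ := φ.toEquiv) h.isVertexCover
    (H' := chordGraph n (doubleFanChords n (φ a) (φ b))) ?_ ?_
  · let e : chordGraph n S ≃g chordGraph n (doubleFanChords n (φ a) (φ b)) :=
      ⟨φ.toEquiv, (hiff _ _).symm⟩
    have hdeg : (chordGraph n S).degree a = (φ b).val - 1 := by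
      rw [← e.degree_eq a]
      refine (degree_chordGraph_doubleFanChords hchord).trans ?_
      rw [hφ, sub_zero]
    have hφb : φ b = ((chordGraph n S).degree a + 1 : ℕ) := by
      rw [hdeg, Nat.sub_add_cancel (by omega), ZMod.natCast_zmod_val]
    refine ⟨φ.toEquiv, ?_⟩
    intro u v
    rw [doubleFan, ← hφb, ← hφ]
    exact or_congr φ.map_rel_iff (hiff u v).symm
  · rw [Set.image_pair]
    exact (isDoubleStar_doubleFanChords hchord).isVertexCover
  · rintro c (rfl | rfl) v
    · exact (hadj_a v).trans (chordGraph_doubleFanChords_adj_left_iff hchord).symm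
    · exact (hadj_b v).trans (chordGraph_doubleFanChords_adj_right_iff hchord).symm

end DoubleFan

/-- The degree multiset of type A4 in the paper's Theorem 1. -/
abbrev degreesA4 (n x : ℕ) : Multiset ℕ :=
  (x + 2) ::ₘ (n - x) ::ₘ (Multiset.replicate (n - 4) 3 + Multiset.replicate 2 2)

theorem degreeMultiset_eq_degreesA4_iff {n x : ℕ} [NeZero n] {S : Set (Sym2 (ZMod n))}
    [(chordGraph n S).LocallyFinite] (hS : NonCrossingChords n S) (hx : x + 4 ≤ n) :
    degreeMultiset n (polygon n ⊔ chordGraph n S) = degreesA4 n x ↔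
      ∃ a b p q, IsDoubleStar (chordGraph n S) a b p q ∧ (chordGraph n S).degree a = x := by
  classical
  have hA4 : degreesA4 n x = (([x + 2, n - x, 2, 2] : List ℕ) : Multiset ℕ) + Multiset.replicate
      ((Finset.univ : Finset (ZMod n)).card - [x + 2, n - x, 2, 2].length) 3 := by
    rw [degreesA4, add_comm (Multiset.replicate _ _), Finset.card_univ, ZMod.card]
    rfl
  rw [hA4, degreeMultiset_eq_map_degree, map_val_eq_coe_add_replicate_iff]
  simp only [degree_polygon_sup_chordGraph (by omega : 2 < n) hS]
  constructor
  · rintro ⟨l, hl, -, hdeg, hrest⟩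
    obtain ⟨a, b, p, q, rfl⟩ : ∃ a b p q, l = [a, b, p, q] :=
      List.length_eq_four.1 (by simpa using congr_arg List.length hdeg)
    simp only [List.map_cons, List.map_nil, List.cons.injEq, and_true] at hdeg
    obtain ⟨ha, hb, hp, hq⟩ := hdeg
    refine ⟨a, b, p, q, isDoubleStar_of_degree hl ?_ (by omega) (by omega) fun v hv ↦ ?_,
      by omega⟩
    · rw [ZMod.card]
      omega
    · simpa using hrest v (Finset.mem_univ v) hv
  · rintro ⟨a, b, p, q, h, rfl⟩
    have hsum := h.degree_add_degree
    rw [ZMod.card] at hsum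
    refine ⟨[a, b, p, q], h.nodup, by simp, ?_, fun v _ hv ↦ by rw [h.degree_eq_one hv]⟩
    simp only [List.map_cons, List.map_nil, h.degree_eq_zero, h.swap_isolated.degree_eq_zero]
    congr 2
    omega

theorem exists_isOuterplane_degreeMultiset_eq_degreesA4 {n x : ℕ} (hx : 1 ≤ x)
    (hxn : x + 4 ≤ n) : ∃ G, IsOuterplane n G ∧ degreeMultiset n G = degreesA4 n x := by
  classical
  have : NeZero n := ⟨by omega⟩
  have hval : ((x + 1 : ℕ) : ZMod n).val = x + 1 := ZMod.val_cast_of_lt (by omega)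
  have hchord : IsChord n s(0, ((x + 1 : ℕ) : ZMod n)) := by
    have hsum := val_sub_add_val_sub (a := 0) (b := ((x + 1 : ℕ) : ZMod n))
      (by rintro h; simp [← h] at hval)
    rw [sub_zero, hval] at hsum
    rw [isChord_iff, sub_zero, hval]
    omega
  have hS := nonCrossingChords_doubleFanChords hchord
  refine ⟨doubleFan n 0 (x + 1 : ℕ), (isOuterplane_iff (by omega)).2 ⟨_, hS, rfl⟩,
    (degreeMultiset_eq_degreesA4_iff hS hxn).2
      ⟨_, _, _, _, isDoubleStar_doubleFanChords hchord, ?_⟩⟩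
  rw [degree_chordGraph_doubleFanChords hchord, sub_zero, hval, Nat.add_sub_cancel]

theorem nonempty_iso_doubleFan_of_degreeMultiset_eq_degreesA4 {n x : ℕ} (hx : 2 ≤ x)
    (hxn : x + 4 ≤ n) {G : SimpleGraph (ZMod n)} (hG : IsOuterplane n G)
    (hdeg : degreeMultiset n G = degreesA4 n x) :
    Nonempty (G ≃g doubleFan n 0 (x + 1 : ℕ)) := by
  classical
  have : NeZero n := ⟨by omega⟩
  obtain ⟨S, hS, rfl⟩ := (isOuterplane_iff (by omega)).1 hG
  obtain ⟨a, b, p, q, h, rfl⟩ := (degreeMultiset_eq_degreesA4_iff hS hxn).1 hdeg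
  have hsum := h.degree_add_degree
  rw [ZMod.card] at hsum
  exact nonempty_iso_doubleFan hS h (by omega) (by omega)

end Outerplane

theorem unigraphic_A4_general (n x : ℕ) (hx : 2 ≤ x) (hxn : x + 4 ≤ n) :
    OuterplaneUnigraphic n
      ((x + 2) ::ₘ (n - x) ::ₘ
        (Multiset.replicate (n - 4) 3 + Multiset.replicate 2 2)) := by
  refine ⟨Outerplane.exists_isOuterplane_degreeMultiset_eq_degreesA4 (by omega) hxn, ?_⟩
  intro G G' hG hG' hdeg hdeg'
  obtain ⟨e⟩ :=
    Outerplane.nonempty_iso_doubleFan_of_degreeMultiset_eq_degreesA4 hx hxn hG hdeg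
  obtain ⟨e'⟩ :=
    Outerplane.nonempty_iso_doubleFan_of_degreeMultiset_eq_degreesA4 hx hxn hG' hdeg'
  exact ⟨e.trans e'.symm⟩

/-- Type A4 of the paper's Theorem 1: for `n ≥ 7` and `⌊n/2⌋ ≤ x ≤ n - 4`, the
multiset `{x+2, n-x, 3^(n-4), 2^2}` is outerplane-unigraphic. -/
theorem unigraphic_A4 (n x : ℕ) (hn : 7 ≤ n) (hx1 : n / 2 ≤ x) (hx2 : x ≤ n - 4) :
    OuterplaneUnigraphic n
      ((x + 2) ::ₘ (n - x) ::ₘ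
        (Multiset.replicate (n - 4) 3 + Multiset.replicate 2 2)) :=
  unigraphic_A4_general n x (by omega) (by omega)
end
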